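/- arXiv:1804.00449 — 2 statements merged into one kernel-verified Lean document; each statement's English description precedes it below -/
import Mathlib

section
/- Let n ≥ 1 be either a prime number or equal to 4. For x ∈ Δ^{n−1} set X_0(x) = 0 and X_ℓ(x) = x_1 + ⋯ + x_ℓ for ℓ ∈ [n], and let D(x) = {(X_{j−1}(x), X_j(x)) : j ∈ [n], x_j > 0} be the set of nonempty pieces (open intervals of positive length) of the division of [0,1] determined by x. Suppose that for each player i ∈ [n] there is a preference function p_i assigning to each x ∈ Δ^{n−1} a nonempty set p_i(x) ⊆ D(x) ∪ {∅} such that: (invariance) if D(x) = D(y) then p_i(x) = p_i(y); (closed preferences) whenever a sequence (x^k) in Δ^{n−1} converges to x, P^k ∈ p_i(x^k) for all k, P ∈ D(x) ∪ {∅}, and the Lebesgue measure of the symmetric difference P^k Δ P tends to 0 as k → ∞, then P ∈ p_i(x); (full division) if x_j > 0 for all j ∈ [n] (so that |D(x)| = n), then ∅ ∉ p_i(x). Then an envy-free division exists: there are x ∈ Δ^{n−1} and a map π : [n] → D(x) ∪ {∅} such that π(i) ∈ p_i(x) for every i ∈ [n], every element of D(x) lies in the image of π, and π(i) = π(i') implies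 i = i' or π(i) = ∅. -/
/-!
A division with named pieces is a word `u` in the letters `Fin n` (the order of the names from left
to right) together with a point of the simplex of lengths spanned by the letters of `u`; deleting
from `u` a name of length zero does not change the division. The group `Z_n` acts by cyclically
shifting the names. A fine iterated barycentric subdivision of each of these simplices is coloured
by players (a vertex introduced in the last step as barycentre of a `k`-dimensional simplex belongs
to player `k`), and each vertex is labelled by a name of the piece its owner picks. The full division
assumption makes this possible: the empty piece is picked only if some name has length zero. The
labels are compatible with deletion of empty names and can be chosen `Z_n`-equivariantly
(`bd_labC`, `labC_map`), so they define an equivariant chain map `Φ` on the complex of injective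
words.

Coning off from the first letter gives an equivariant chain homotopy from `Φ` to the identity
(`bd_hL`, `hL_map`). Let `det` be the signed indicator of simplices carrying all `n` labels. It
vanishes on boundaries, so for each permutation `w`, written as a word, `sign w * det (Φ w)` equals
`1` plus a sum over the facets of `w`. Summing over the `(n-1)!` permutations with first letter `0`,
one for each `Z_n`-orbit, the facet terms cancel modulo `n` by equivariance (`sum_facets`), and the
total is `(n-1)!` modulo `n` (`count_full`). This is nonzero when `n` is prime or `n = 4`. Hence
some arbitrarily small simplex carries all players and all labels (`exists_rainbow`). A limit of
such simplices along which the assignment of pieces to players is constant is an envy-free division,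
by the closedness of the preferences.
-/

open MeasureTheory Filter

noncomputable section

/-- X_ℓ(x) = x_1 + ⋯ + x_ℓ, the position of the ℓ-th cut (here ℓ : ℕ, and the sum is over
the indices i : Fin n with (i : ℕ) < ℓ; in particular `cut x 0 = 0` and
`cut x n = 1` for x in the standard simplex). -/
def cut {n : ℕ} (x : Fin n → ℝ) (ℓ : ℕ) : ℝ :=
  ∑ i ∈ Finset.univ.filter (fun i : Fin n => (i : ℕ) < ℓ), x i

/-- D(x): the set of nonempty pieces of the division of [0,1] determined by x, namely the
open intervals (X_{j-1}(x), X_j(x)) for those j with x_j > 0. -/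
def pieces {n : ℕ} (x : Fin n → ℝ) : Set (Set ℝ) :=
  {I | ∃ j : Fin n, 0 < x j ∧ I = Set.Ioo (cut x (j : ℕ)) (cut x ((j : ℕ) + 1))}

/-! ### Chains on lists -/

/-- Ordered chains with coefficients in `R`: formal combinations of lists of vertices. A list of
length `k` is a `(k-1)`-simplex, possibly degenerate, and the empty list is the simplex of
dimension `-1` of the augmented complex. -/
abbrev Chain (R A : Type*) [CommRing R] := List A →₀ R

section Chains

variable {R : Type*} [CommRing R] {A B : Type*}

/-- The join with the vertex `a`. -/
def cone (a : A) : Chain R A →ₗ[R] Chain R A := Finsupp.lmapDomain R R (List.cons a)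

/-- The alternating sum of the faces of a simplex. -/
def faces : List A → Chain R A
  | [] => 0
  | a :: l => Finsupp.single l 1 - cone a (faces l)

/-- The boundary operator. -/
def bd : Chain R A →ₗ[R] Chain R A := Finsupp.linearCombination R faces

/-- The chain map induced by a map of vertices. -/
def mapC (f : A → B) : Chain R A →ₗ[R] Chain R B := Finsupp.lmapDomain R R (List.map f)

@[simp] lemma cone_single (a : A) (l : List A) (r : R) :
    cone a (Finsupp.single l r) = Finsupp.single (a :: l) r := by
  simp [cone, Finsupp.mapDomain_single]

@[simp] lemma mapC_single (f : A → B) (l : List A) (r : R) :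
    mapC f (Finsupp.single l r) = Finsupp.single (l.map f) r := by
  simp [mapC, Finsupp.mapDomain_single]

@[simp] lemma bd_single (l : List A) : bd (Finsupp.single l (1 : R)) = faces l := by
  simp [bd]

lemma chain_ext {M : Type*} [AddCommGroup M] [Module R M] {φ ψ : Chain R A →ₗ[R] M}
    (h : ∀ l, φ (Finsupp.single l 1) = ψ (Finsupp.single l 1)) (c : Chain R A) : φ c = ψ c := by
  have : φ = ψ := by
    refine Finsupp.lhom_ext' fun l => LinearMap.ext_ring ?_
    simpa using h l
  rw [this]

lemma bd_cone (a : A) (c : Chain R A) : bd (cone a c) = c - cone a (bd c) := by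
  refine chain_ext (φ := bd ∘ₗ cone a) (ψ := LinearMap.id - cone a ∘ₗ bd) (fun l => ?_) c
  simp [faces]

lemma bd_faces (l : List A) : bd (faces l : Chain R A) = 0 := by
  induction l with
  | nil => simp [faces]
  | cons a l ih => simp [faces, bd_cone, ih]

lemma mapC_cone (f : A → B) (a : A) (c : Chain R A) :
    mapC f (cone a c) = cone (f a) (mapC f c) := by
  refine chain_ext (φ := mapC f ∘ₗ cone a) (ψ := cone (f a) ∘ₗ mapC f) (fun l => ?_) c
  simp

lemma mapC_faces (f : A → B) (l : List A) :
    mapC f (faces l : Chain R A) = faces (l.map f) := by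
  induction l with
  | nil => simp [faces]
  | cons a l ih => simp [faces, mapC_cone, ih]

lemma mapC_bd (f : A → B) (c : Chain R A) : mapC f (bd c) = bd (mapC f c) := by
  refine chain_ext (φ := mapC f ∘ₗ bd) (ψ := bd ∘ₗ mapC f) (fun l => ?_) c
  simp [mapC_faces]

lemma faces_eq_sum (l : List A) :
    (faces l : Chain R A) =
      ∑ i : Fin l.length, (-1 : R) ^ (i : ℕ) • Finsupp.single (l.eraseIdx i) 1 := by
  induction l with
  | nil => simp [faces]
  | cons a l ih =>
    have : (faces (a :: l) : Chain R A) = Finsupp.single l 1 - cone a (faces l) := rfl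
    rw [this, ih]
    simp only [List.length_cons, Fin.sum_univ_succ, map_sum, map_smul, cone_single]
    simp [pow_succ, sub_eq_add_neg]

/-- Linear maps agreeing on the codimension one faces of `l` agree on its boundary. -/
lemma map_faces_congr {M : Type*} [AddCommGroup M] [Module R M] {φ ψ : Chain R A →ₗ[R] M}
    (l : List A) (h : ∀ i < l.length, φ (Finsupp.single (l.eraseIdx i) 1) =
      ψ (Finsupp.single (l.eraseIdx i) 1)) : φ (faces l) = ψ (faces l) := by
  rw [faces_eq_sum]
  simp only [map_sum, map_smul]
  exact Finset.sum_congr rfl fun i _ => by rw [h i i.2]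

lemma mem_support_linearCombination {f : A → B →₀ R} {c : A →₀ R} {b : B}
    (h : b ∈ (Finsupp.linearCombination R f c).support) : ∃ a ∈ c.support, b ∈ (f a).support := by
  classical
  rw [Finsupp.linearCombination_apply, Finsupp.sum] at h
  obtain ⟨a, ha, hb⟩ := Finset.mem_biUnion.1 (Finsupp.support_finsetSum h)
  exact ⟨a, ha, Finsupp.support_smul hb⟩

lemma mem_support_faces {l l' : List A} (h : l' ∈ (faces l : Chain R A).support) :
    ∃ i < l.length, l' = l.eraseIdx i := by
  classical
  rw [faces_eq_sum] at h
  obtain ⟨i, -, hb⟩ := Finset.mem_biUnion.1 (Finsupp.support_finsetSum h)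
  have := Finsupp.support_single_subset (Finsupp.support_smul hb)
  exact ⟨i, i.2, by simpa using this⟩

lemma mem_support_mapDomain {f : A → B} {c : A →₀ R} {b : B}
    (h : b ∈ (Finsupp.mapDomain f c).support) : ∃ a ∈ c.support, f a = b := by
  classical
  simpa using Finsupp.mapDomain_support h

lemma mapC_congr {f g : A → B} (c : Chain R A) (h : ∀ l ∈ c.support, ∀ a ∈ l, f a = g a) :
    mapC f c = mapC g c := by
  simp only [mapC, Finsupp.lmapDomain_apply]
  exact Finsupp.mapDomain_congr fun l hl => List.map_congr_left (h l hl)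

lemma mapC_mapC {C : Type*} (f : A → B) (g : B → C) (c : Chain R A) :
    mapC g (mapC f c) = mapC (g ∘ f) c := by
  refine chain_ext (φ := mapC g ∘ₗ mapC f) (ψ := mapC (g ∘ f)) (fun l => ?_) c
  simp

end Chains

/-! ### Barycentric subdivision -/

section Subdivision

variable {R : Type*} [CommRing R] {E : Type*} [NormedAddCommGroup E] [NormedSpace ℝ E]

/-- The barycentre of a simplex, coloured by the dimension of the simplex. The colours present in
the argument are ignored. -/
def bary (l : List (E × ℕ)) : E × ℕ :=
  ((l.length : ℝ)⁻¹ • (l.map Prod.fst).sum, l.length - 1)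

/-- Barycentric subdivision of a simplex: the cone, with apex the barycentre, over the subdivided
boundary. -/
def sdL : List (E × ℕ) → Chain R (E × ℕ)
  | [] => Finsupp.single [] 1
  | a :: l => cone (bary (a :: l)) (∑ i : Fin (l.length + 1),
      (-1 : R) ^ (i : ℕ) • sdL ((a :: l).eraseIdx i))
termination_by l => l.length
decreasing_by
  have := i.2
  rw [List.length_eraseIdx_of_lt (by simpa using this)]
  simp

/-- Barycentric subdivision of chains. -/
def sd : Chain R (E × ℕ) →ₗ[R] Chain R (E × ℕ) := Finsupp.linearCombination R sdL

@[simp] lemma sd_single (l : List (E × ℕ)) : sd (Finsupp.single l (1 : R)) = sdL l := by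
  simp [sd]

@[simp] lemma sdL_nil : (sdL [] : Chain R (E × ℕ)) = Finsupp.single [] 1 := by
  rw [sdL]

lemma sdL_eq {l : List (E × ℕ)} (hl : l ≠ []) :
    (sdL l : Chain R (E × ℕ)) = cone (bary l) (sd (faces l)) := by
  obtain ⟨a, l, rfl⟩ := List.exists_cons_of_ne_nil hl
  rw [sdL, faces_eq_sum]
  simp only [map_sum, map_smul, sd_single, List.length_cons]

lemma length_ind {A : Type*} {P : List A → Prop}
    (h : ∀ l, (∀ i < l.length, P (l.eraseIdx i)) → P l) (l : List A) : P l := by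
  induction hk : l.length generalizing l with
  | zero => exact h l (by simp [hk])
  | succ k ih =>
    refine h l fun i hi => ih _ ?_
    rw [List.length_eraseIdx_of_lt hi, hk, Nat.add_sub_cancel]

lemma bd_sdL (l : List (E × ℕ)) : bd (sdL l : Chain R (E × ℕ)) = sd (faces l) := by
  induction l using length_ind with
  | h l ih =>
    by_cases hl : l = []
    · subst hl; simp [faces]
    · rw [sdL_eq hl, bd_cone]
      have : bd (sd (faces l : Chain R (E × ℕ))) = sd (bd (faces l)) :=
        map_faces_congr (φ := bd ∘ₗ sd) (ψ := sd ∘ₗ bd) l fun i hi => by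
          simpa using ih i hi
      rw [this, bd_faces]
      simp

lemma bd_sd (c : Chain R (E × ℕ)) : bd (sd c) = sd (bd c) :=
  chain_ext (φ := bd ∘ₗ sd) (ψ := sd ∘ₗ bd) (fun l => by simp [bd_sdL]) c

lemma bd_sd_pow (m : ℕ) (c : Chain R (E × ℕ)) : bd ((sd ^ m) c) = (sd ^ m) (bd c) := by
  induction m with
  | zero => simp
  | succ m ih => rw [pow_succ', Module.End.mul_apply, Module.End.mul_apply, bd_sd, ih]

lemma mem_support_sdL {l l' : List (E × ℕ)} (hl : l ≠ [])
    (h : l' ∈ (sdL l : Chain R (E × ℕ)).support) :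
    ∃ i < l.length, ∃ t ∈ (sdL (l.eraseIdx i) : Chain R (E × ℕ)).support, l' = bary l :: t := by
  rw [sdL_eq hl, cone, Finsupp.lmapDomain_apply] at h
  obtain ⟨t, ht, rfl⟩ := mem_support_mapDomain h
  obtain ⟨s, hs, hts⟩ := mem_support_linearCombination ht
  obtain ⟨i, hi, rfl⟩ := mem_support_faces hs
  exact ⟨i, hi, t, hts, rfl⟩

lemma sdL_colours {l l' : List (E × ℕ)} (h : l' ∈ (sdL l : Chain R (E × ℕ)).support) :
    l'.map Prod.snd = (List.range l.length).reverse := by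
  induction l using length_ind generalizing l' with
  | h l ih =>
    by_cases hl : l = []
    · subst hl
      rw [sdL_nil] at h
      have := Finsupp.support_single_subset h
      simp_all
    · obtain ⟨i, hi, t, ht, rfl⟩ := mem_support_sdL hl h
      have hpos : 0 < l.length := List.length_pos_of_ne_nil hl
      rw [List.map_cons, ih i hi ht, List.length_eraseIdx_of_lt hi]
      obtain ⟨k, hk⟩ : ∃ k, l.length = k + 1 := ⟨l.length - 1, by omega⟩
      simp [bary, hk, List.range_succ]

lemma sdL_length {l l' : List (E × ℕ)} (h : l' ∈ (sdL l : Chain R (E × ℕ)).support) :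
    l'.length = l.length := by
  simpa using congrArg List.length (sdL_colours h)

lemma bary_mem {K : Set E} (hK : Convex ℝ K) {l : List (E × ℕ)} (hl : l ≠ [])
    (h : ∀ a ∈ l, a.1 ∈ K) : (bary l).1 ∈ K := by
  have hpos : 0 < l.length := List.length_pos_of_ne_nil hl
  have e : (bary l).1 = ∑ i : Fin l.length, (l.length : ℝ)⁻¹ • (l[i]).1 := by
    rw [← Finset.smul_sum, bary]
    rw [← List.sum_ofFn]
    change (l.length : ℝ)⁻¹ • (l.map Prod.fst).sum = _
    congr 2
    apply List.ext_getElem <;> simp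
  rw [e]
  refine hK.sum_mem (fun _ _ => by positivity) ?_ (fun i _ => h _ (List.getElem_mem _))
  have : (l.length : ℝ) ≠ 0 := by positivity
  simp [this]

lemma sdL_mem {K : Set E} (hK : Convex ℝ K) {l l' : List (E × ℕ)} (h : ∀ a ∈ l, a.1 ∈ K)
    (h' : l' ∈ (sdL l : Chain R (E × ℕ)).support) : ∀ a ∈ l', a.1 ∈ K := by
  induction l using length_ind generalizing l' with
  | h l ih =>
    by_cases hl : l = []
    · subst hl
      rw [sdL_nil] at h'
      have := Finsupp.support_single_subset h'
      simp_all
    · obtain ⟨i, hi, t, ht, rfl⟩ := mem_support_sdL hl h'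
      intro a ha
      rcases List.mem_cons.1 ha with rfl | ha
      · exact bary_mem hK hl h
      · exact ih i hi (fun b hb => h b (List.mem_of_mem_eraseIdx hb)) ht a ha

lemma sum_dist_le {d : ℝ} (a : E × ℕ) (l : List (E × ℕ))
    (h : ∀ b ∈ l, ‖b.1 - a.1‖ ≤ d) :
    ‖(l.map Prod.fst).sum - (l.length : ℝ) • a.1‖ ≤ l.length * d ∧
      (a ∈ l → ‖(l.map Prod.fst).sum - (l.length : ℝ) • a.1‖ ≤ (l.length - 1) * d) := by
  induction l with
  | nil => simp
  | cons b l ih =>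
    obtain ⟨h1, h2⟩ := ih fun c hc => h c (List.mem_cons_of_mem _ hc)
    have e : ((b :: l).map Prod.fst).sum - ((b :: l).length : ℝ) • a.1 =
        (b.1 - a.1) + ((l.map Prod.fst).sum - (l.length : ℝ) • a.1) := by
      simp only [List.map_cons, List.sum_cons, List.length_cons, Nat.cast_add, Nat.cast_one]
      module
    have hb := h b List.mem_cons_self
    have tri := norm_add_le (b.1 - a.1) ((l.map Prod.fst).sum - (l.length : ℝ) • a.1)
    rw [e]
    simp only [List.length_cons, Nat.cast_add, Nat.cast_one]
    refine ⟨by linarith, fun ha => ?_⟩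
    rcases List.mem_cons.1 ha with rfl | ha
    · simp only [sub_self, zero_add, add_sub_cancel_right]
      exact h1
    · have := h2 ha
      linarith

lemma bary_dist {d : ℝ} {l : List (E × ℕ)} {N : ℕ} (hd : 0 ≤ d) (hN : l.length ≤ N)
    (h : ∀ a ∈ l, ∀ b ∈ l, ‖b.1 - a.1‖ ≤ d) {a : E × ℕ} (ha : a ∈ l) :
    ‖(bary l).1 - a.1‖ ≤ (1 - 1 / (N : ℝ)) * d := by
  have hpos : 0 < l.length := List.length_pos_of_mem ha
  have hp : (0 : ℝ) < l.length := by exact_mod_cast hpos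
  have hN' : (l.length : ℝ) ≤ N := by exact_mod_cast hN
  have e : (bary l).1 - a.1 =
      (l.length : ℝ)⁻¹ • ((l.map Prod.fst).sum - (l.length : ℝ) • a.1) := by
    rw [smul_sub, smul_smul, inv_mul_cancel₀ hp.ne', one_smul, bary]
  rw [e, norm_smul, norm_inv, Real.norm_of_nonneg hp.le]
  have h2 := (sum_dist_le a l (h a ha)).2 ha
  calc (l.length : ℝ)⁻¹ * _ ≤ (l.length : ℝ)⁻¹ * ((l.length - 1) * d) := by gcongr
    _ = (1 - 1 / (l.length : ℝ)) * d := by field_simp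
    _ ≤ _ := by gcongr

lemma sdL_diam {d : ℝ} {l l' : List (E × ℕ)} {N : ℕ} (hd : 0 ≤ d) (hN : l.length ≤ N)
    (h : ∀ a ∈ l, ∀ b ∈ l, ‖b.1 - a.1‖ ≤ d)
    (h' : l' ∈ (sdL l : Chain R (E × ℕ)).support) :
    ∀ a ∈ l', ∀ b ∈ l', ‖b.1 - a.1‖ ≤ (1 - 1 / (N : ℝ)) * d := by
  induction l using length_ind generalizing l' with
  | h l ih =>
    by_cases hl : l = []
    · subst hl
      rw [sdL_nil] at h'
      have := Finsupp.support_single_subset h'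
      simp_all
    · obtain ⟨i, hi, t, ht, rfl⟩ := mem_support_sdL hl h'
      have hN1 : (1 : ℝ) ≤ N := by
        have : 0 < l.length := List.length_pos_of_ne_nil hl
        exact_mod_cast (by omega : 1 ≤ N)
      have hc : 0 ≤ (1 - 1 / (N : ℝ)) * d := by
        have : 1 / (N : ℝ) ≤ 1 := by rw [div_le_one (by linarith)]; exact hN1
        exact mul_nonneg (by linarith) hd
      -- The new simplex lies in a ball around the barycentre, by convexity of balls.
      have hball : ∀ a ∈ t, ‖(bary l).1 - a.1‖ ≤ (1 - 1 / (N : ℝ)) * d := by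
        intro a ha
        have := sdL_mem (convex_closedBall (bary l).1 ((1 - 1 / (N : ℝ)) * d))
          (l := l.eraseIdx i) (fun b hb => by
            rw [mem_closedBall_iff_norm']
            exact bary_dist hd hN h (List.mem_of_mem_eraseIdx hb)) ht a ha
        rwa [mem_closedBall_iff_norm'] at this
      have hind := ih i hi (l' := t)
        (by rw [List.length_eraseIdx_of_lt hi]; omega)
        (fun a ha b hb => h a (List.mem_of_mem_eraseIdx ha) b (List.mem_of_mem_eraseIdx hb)) ht
      intro a ha b hb
      rcases List.mem_cons.1 ha with rfl | ha <;> rcases List.mem_cons.1 hb with rfl | hb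
      · simpa using hc
      · rw [norm_sub_rev]; exact hball b hb
      · exact hball a ha
      · exact hind a ha b hb

lemma sd_pow_length {l l' : List (E × ℕ)} (m : ℕ)
    (h' : l' ∈ ((sd ^ m) (Finsupp.single l 1) : Chain R (E × ℕ)).support) :
    l'.length = l.length := by
  induction m generalizing l' with
  | zero =>
    have := Finsupp.support_single_subset h'
    rw [Finset.mem_singleton] at this
    rw [this]
  | succ m ih =>
    rw [pow_succ', Module.End.mul_apply] at h'
    obtain ⟨t, ht, hl'⟩ := mem_support_linearCombination h'
    exact (sdL_length hl').trans (ih ht)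

lemma sd_pow_mem {K : Set E} (hK : Convex ℝ K) {l l' : List (E × ℕ)} (m : ℕ)
    (h : ∀ a ∈ l, a.1 ∈ K)
    (h' : l' ∈ ((sd ^ m) (Finsupp.single l 1) : Chain R (E × ℕ)).support) :
    ∀ a ∈ l', a.1 ∈ K := by
  induction m generalizing l' with
  | zero =>
    have := Finsupp.support_single_subset h'
    rw [Finset.mem_singleton] at this
    subst this
    simpa using h
  | succ m ih =>
    rw [pow_succ', Module.End.mul_apply] at h'
    obtain ⟨t, ht, hl'⟩ := mem_support_linearCombination h'
    exact sdL_mem hK (ih ht) hl'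

lemma sd_pow_diam {d : ℝ} {l l' : List (E × ℕ)} {N : ℕ} (hd : 0 ≤ d) (hN : l.length ≤ N)
    (h : ∀ a ∈ l, ∀ b ∈ l, ‖b.1 - a.1‖ ≤ d) (m : ℕ)
    (h' : l' ∈ ((sd ^ m) (Finsupp.single l 1) : Chain R (E × ℕ)).support) :
    ∀ a ∈ l', ∀ b ∈ l', ‖b.1 - a.1‖ ≤ (1 - 1 / (N : ℝ)) ^ m * d := by
  induction m generalizing l' with
  | zero =>
    have := Finsupp.support_single_subset h'
    rw [Finset.mem_singleton] at this
    subst this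
    simpa using h
  | succ m ih =>
    rw [pow_succ', Module.End.mul_apply] at h'
    obtain ⟨t, ht, hl'⟩ := mem_support_linearCombination h'
    rw [pow_succ', mul_assoc]
    have hN1 : 0 ≤ 1 - 1 / (N : ℝ) := by
      rcases Nat.eq_zero_or_pos N with rfl | hN
      · simp
      · have : (1 : ℝ) ≤ N := by exact_mod_cast hN
        have : 1 / (N : ℝ) ≤ 1 := by rw [div_le_one (by linarith)]; exact this
        linarith
    exact sdL_diam (by positivity) ((sd_pow_length m ht).trans_le hN) (ih ht) hl'

lemma sd_pow_colours {l l' : List (E × ℕ)} (m : ℕ)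
    (h' : l' ∈ ((sd ^ (m + 1)) (Finsupp.single l 1) : Chain R (E × ℕ)).support) :
    l'.map Prod.snd = (List.range l.length).reverse := by
  rw [pow_succ', Module.End.mul_apply] at h'
  obtain ⟨t, ht, hl'⟩ := mem_support_linearCombination h'
  rw [sdL_colours hl', sd_pow_length m ht]

/-- Subdivision commutes with linear maps of the ambient space. -/
lemma mapC_sdL (T : E →ₗ[ℝ] E) (l : List (E × ℕ)) :
    mapC (Prod.map T id) (sdL l : Chain R (E × ℕ)) = sdL (l.map (Prod.map T id)) := by
  induction l using length_ind with
  | h l ih =>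
    by_cases hl : l = []
    · subst hl; simp
    · have hl' : l.map (Prod.map T id) ≠ [] := by simpa using hl
      rw [sdL_eq hl, sdL_eq hl', mapC_cone, ← mapC_faces]
      have hb : Prod.map T id (bary l) = bary (l.map (Prod.map T id)) := by
        simp [bary, map_list_sum, Function.comp_def]
      rw [hb]
      congr 1
      exact map_faces_congr (φ := mapC (Prod.map T id) ∘ₗ (sd : Chain R (E × ℕ) →ₗ[R] _))
        (ψ := (sd : Chain R (E × ℕ) →ₗ[R] _) ∘ₗ mapC (Prod.map T id)) l
        fun i hi => by simpa using ih i hi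

lemma mapC_sd_pow (T : E →ₗ[ℝ] E) (m : ℕ) (c : Chain R (E × ℕ)) :
    mapC (Prod.map T id) ((sd ^ m) c) = (sd ^ m) (mapC (Prod.map T id) c) := by
  induction m with
  | zero => simp
  | succ m ih =>
    rw [pow_succ', Module.End.mul_apply, Module.End.mul_apply, ← ih]
    exact chain_ext (φ := mapC (Prod.map T id) ∘ₗ (sd : Chain R (E × ℕ) →ₗ[R] _))
        (ψ := (sd : Chain R (E × ℕ) →ₗ[R] _) ∘ₗ mapC (Prod.map T id))
      (fun l => by simp [mapC_sdL]) _

end Subdivision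

/-! ### The determinant of a chain and the homotopy to the identity -/

section Determinant

variable {R : Type*} [CommRing R] {n : ℕ}

/-- The signed indicator of full simplices: the determinant of the matrix whose `i`-th row is the
basis vector indexed by the `i`-th entry of `l`. Only lists of length `n` are of interest. -/
def detL (R : Type*) [CommRing R] {n : ℕ} (l : List (Fin n)) : R :=
  Matrix.det (Matrix.of fun i j : Fin n => if l[(i : ℕ)]? = some j then (1 : R) else 0)

/-- The linear extension of `detL` to chains. -/
def detC : Chain R (Fin n) →ₗ[R] R := Finsupp.linearCombination R (detL R)

@[simp] lemma detC_single (l : List (Fin n)) : detC (Finsupp.single l (1 : R)) = detL R l := by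
  simp [detC]

lemma detL_map (γ : Equiv.Perm (Fin n)) (l : List (Fin n)) :
    detL R (l.map γ) = (Equiv.Perm.sign γ : ℤ) * detL R l := by
  rw [← Equiv.Perm.sign_inv γ, detL, detL, ← Matrix.det_permute']
  congr 1
  ext i j
  simp only [Matrix.submatrix_apply, Matrix.of_apply, List.getElem?_map, Option.map_eq_some_iff,
    id]
  congr 1
  refine propext ⟨?_, fun h => ⟨_, h, by simp⟩⟩
  rintro ⟨a, ha, rfl⟩
  simpa using ha

lemma detC_mapC (γ : Equiv.Perm (Fin n)) (c : Chain R (Fin n)) :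
    detC (mapC γ c) = (Equiv.Perm.sign γ : ℤ) * detC c :=
  chain_ext (φ := detC ∘ₗ mapC γ) (ψ := ((Equiv.Perm.sign γ : ℤ) : R) • detC)
    (fun l => by simp [detL_map]) c

lemma detL_ofFn (v : Fin n → Fin n) :
    detL R (List.ofFn v) = Matrix.det (Matrix.of fun i j => if v i = j then (1 : R) else 0) := by
  simp [detL]

lemma detL_perm (σ : Equiv.Perm (Fin n)) :
    detL R (List.ofFn σ) = (Equiv.Perm.sign σ : ℤ) := by
  have h : List.ofFn σ = (List.ofFn id).map σ := by simp [List.map_ofFn]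
  have h1 : detL R (List.ofFn (id : Fin n → Fin n)) = 1 := by
    rw [detL_ofFn]
    exact Matrix.det_one
  rw [h, detL_map, h1, mul_one]

lemma nodup_of_detL_ne_zero {l : List (Fin n)} (hl : l.length = n) (h : detL R l ≠ 0) :
    l.Nodup := by
  contrapose! h
  rw [List.nodup_iff_injective_get] at h
  simp only [Function.Injective, not_forall] at h
  obtain ⟨i, j, hij, hne⟩ := h
  refine Matrix.det_zero_of_row_eq (i := Fin.cast hl i) (j := Fin.cast hl j)
    (fun h => hne (by simpa [Fin.ext_iff] using h)) ?_
  ext k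
  simp only [List.get_eq_getElem] at hij
  simp [hij]

lemma faces_ofFn {A : Type*} {k : ℕ} (v : Fin (k + 1) → A) :
    (faces (List.ofFn v) : Chain R A) =
      ∑ i : Fin (k + 1), (-1 : R) ^ (i : ℕ) • Finsupp.single (List.ofFn (v ∘ i.succAbove)) 1 := by
  induction k with
  | zero => simp [faces]
  | succ k ih =>
    rw [List.ofFn_succ]
    have : ∀ (a : A) l, (faces (a :: l) : Chain R A) = Finsupp.single l 1 - cone a (faces l) :=
      fun _ _ => rfl
    rw [this, ih, Fin.sum_univ_succ (n := k + 1)]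
    simp only [map_sum, map_smul, cone_single]
    simp [pow_succ, sub_eq_add_neg, Function.comp_def, List.ofFn_succ]

/-- Adjoining a column of ones to `n + 1` rows that are basis vectors of `R ^ n` gives a singular
matrix, and the determinant of the boundary is its expansion along that column. -/
lemma detC_faces {l : List (Fin n)} (hl : l.length = n + 1) : detC (faces l : Chain R _) = 0 := by
  obtain ⟨v, rfl⟩ : ∃ v : Fin (n + 1) → Fin n, l = List.ofFn v :=
    ⟨fun i => l[i], List.ext_getElem (by simp [hl]) fun i _ _ => by
      rw [List.getElem_ofFn]; rfl⟩
  let M : Matrix (Fin (n + 1)) (Fin (n + 1)) R :=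
    Matrix.of fun i j => Fin.cases 1 (fun k => if v i = k then 1 else 0) j
  let u : Fin (n + 1) → R := Fin.cases 1 fun _ => -1
  have hM : M.mulVec u = 0 := by
    ext i
    simp [Matrix.mulVec, dotProduct, Fin.sum_univ_succ, M, u]
  have hdet : M.det = 0 := by
    have := congrArg (M.adjugate.mulVec) hM
    rw [Matrix.mulVec_mulVec, Matrix.adjugate_mul, Matrix.mulVec_zero, Matrix.smul_mulVec,
      Matrix.one_mulVec] at this
    simpa [u] using congrFun this 0
  rw [← hdet, Matrix.det_succ_column_zero, faces_ofFn]
  simp only [map_sum, map_smul, detC_single, detL_ofFn, smul_eq_mul]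
  refine Finset.sum_congr rfl fun i _ => ?_
  have : M i 0 = 1 := rfl
  rw [this, mul_one]
  rfl

lemma detC_bd {c : Chain R (Fin n)} (hc : ∀ l ∈ c.support, l.length = n + 1) :
    detC (bd c) = 0 := by
  rw [bd, Finsupp.linearCombination_apply, Finsupp.sum, map_sum]
  exact Finset.sum_eq_zero fun l hl => by rw [map_smul, detC_faces (hc l hl), smul_zero]

end Determinant

section Homotopy

variable {R : Type*} [CommRing R] {B : Type*}

/-- The linear extension of a function on lists of vertices. -/
abbrev lin (Φ : List B → Chain R B) : Chain R B →ₗ[R] Chain R B := Finsupp.linearCombination R Φ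

/-- The chain homotopy between `lin Φ` and the identity obtained by coning off from the first
letter of each word; this choice of apex makes it natural under relabelling. -/
def hL (Φ : List B → Chain R B) : List B → Chain R B
  | [] => 0
  | a :: l => cone a (Φ (a :: l) - Finsupp.single (a :: l) 1 -
      ∑ i : Fin (l.length + 1), (-1 : R) ^ (i : ℕ) • hL Φ ((a :: l).eraseIdx i))
termination_by l => l.length
decreasing_by
  have := i.2
  rw [List.length_eraseIdx_of_lt (by simpa using this)]
  simp

variable {Φ : List B → Chain R B}

lemma lin_single (l : List B) : lin Φ (Finsupp.single l (1 : R)) = Φ l := by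
  simp

lemma hL_nil : hL Φ [] = 0 := by rw [hL]

lemma hL_cons (a : B) (l : List B) : hL Φ (a :: l) =
    cone a (Φ (a :: l) - Finsupp.single (a :: l) 1 - lin (hL Φ) (faces (a :: l))) := by
  rw [hL, faces_eq_sum]
  simp only [map_sum, map_smul, lin_single, List.length_cons]

/-- `hL Φ` is a homotopy between `lin Φ` and the identity as soon as `Φ` commutes with boundaries on
words without repetition. -/
lemma bd_hL (h0 : Φ [] = Finsupp.single [] 1)
    (hΦ : ∀ u : List B, u.Nodup → bd (Φ u) = lin Φ (faces u)) (u : List B) (hu : u.Nodup) :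
    bd (hL Φ u) = Φ u - Finsupp.single u 1 - lin (hL Φ) (faces u) := by
  induction u using length_ind with
  | h u ih =>
    cases u with
    | nil => simp [hL_nil, h0, faces]
    | cons a l =>
      have key : bd (lin (hL Φ) (faces (a :: l))) =
          lin Φ (faces (a :: l)) - faces (a :: l) - lin (hL Φ) (bd (faces (a :: l))) :=
        map_faces_congr (φ := bd ∘ₗ lin (hL Φ))
          (ψ := lin Φ - LinearMap.id - lin (hL Φ) ∘ₗ bd) (a :: l) fun i hi => by
            simpa using ih i hi (hu.eraseIdx i)
      rw [hL_cons, bd_cone, map_sub, map_sub (bd : Chain R B →ₗ[R] _), hΦ _ hu, bd_single, key,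
        bd_faces]
      simp

lemma hL_map (γ : B → B) (hγ : ∀ u : List B, u.Nodup → Φ (u.map γ) = mapC γ (Φ u))
    (u : List B) (hu : u.Nodup) : hL Φ (u.map γ) = mapC γ (hL Φ u) := by
  induction u using length_ind with
  | h u ih =>
    cases u with
    | nil => simp [hL_nil]
    | cons a l =>
      have key : mapC γ (lin (hL Φ) (faces (a :: l))) =
          lin (hL Φ) (mapC γ (faces (a :: l))) :=
        map_faces_congr (φ := mapC γ ∘ₗ lin (hL Φ))
          (ψ := lin (hL Φ) ∘ₗ mapC γ) (a :: l) fun i hi => by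
            simpa using (ih i hi (hu.eraseIdx i)).symm
      rw [hL_cons, mapC_cone, map_sub, map_sub (mapC γ : Chain R B →ₗ[R] _), key, mapC_faces,
        ← hγ _ hu, mapC_single, List.map_cons, hL_cons]

lemma hL_length (hlen : ∀ u, ∀ l ∈ (Φ u).support, l.length = u.length) (u : List B) :
    ∀ l ∈ (hL Φ u).support, l.length = u.length + 1 := by
  classical
  induction u using length_ind with
  | h u ih =>
    cases u with
    | nil => simp [hL_nil]
    | cons a t =>
      intro l hl
      rw [hL_cons, cone, Finsupp.lmapDomain_apply] at hl
      obtain ⟨s, hs, rfl⟩ := mem_support_mapDomain hl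
      rw [List.length_cons, Nat.add_right_cancel_iff]
      rcases Finset.mem_union.1 (Finsupp.support_sub hs) with hs | hs
      · rcases Finset.mem_union.1 (Finsupp.support_sub hs) with hs | hs
        · exact hlen _ _ hs
        · have := Finsupp.support_single_subset hs
          simp_all
      · obtain ⟨r, hr, hsr⟩ := mem_support_linearCombination hs
        obtain ⟨i, hi, rfl⟩ := mem_support_faces hr
        rw [ih i hi _ hsr, List.length_eraseIdx_of_lt hi]
        have : 0 < (a :: t).length := by simp
        omega

end Homotopy

/-! ### The count modulo `n` -/

section Count

open Equiv.Perm hiding sign_mul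

variable {m : ℕ}

/-- For a function on permutations invariant under the cyclic group acting on values, the position
at which the value `0` is required does not matter. -/
lemma sum_cyclic {M : Type*} [AddCommMonoid M] (Ψ : Equiv.Perm (Fin (m + 2)) → M)
    (h : ∀ c σ, Ψ (Equiv.addLeft c * σ) = Ψ σ) (i j : Fin (m + 2)) :
    ∑ σ with σ i = 0, Ψ σ = ∑ σ with σ j = 0, Ψ σ := by
  refine Finset.sum_bij' (fun σ _ => Equiv.addLeft (-σ j) * σ)
    (fun σ _ => Equiv.addLeft (-σ i) * σ) ?_ ?_ ?_ ?_ ?_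
  · intro σ _; simp
  · intro σ _; simp
  · intro σ hσ
    have : σ i = 0 := by simpa using hσ
    ext k; simp [this]
  · intro σ hσ
    have : σ j = 0 := by simpa using hσ
    ext k; simp [this]
  · intro σ _; exact (h _ _).symm

lemma card_fix : (Finset.univ.filter fun σ : Equiv.Perm (Fin (m + 1)) => σ 0 = 0).card =
    Nat.factorial m := by
  have hm : (Finset.univ : Finset (Equiv.Perm (Fin m))).card = Nat.factorial m := by
    rw [Finset.card_univ, Fintype.card_perm, Fintype.card_fin]
  rw [← hm]
  refine Finset.card_bij' (fun σ _ => (decomposeFin σ).2) (fun e _ => decomposeFin.symm (0, e))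
    (fun _ _ => Finset.mem_univ _) (fun e _ => by simp) (fun σ hσ => ?_) (fun e _ => by simp)
  have := decomposeFin_symm_apply_zero (decomposeFin σ).1 (decomposeFin σ).2
  simp only [Prod.mk.eta, Equiv.symm_apply_apply] at this
  rw [Equiv.symm_apply_eq]
  refine Prod.ext ?_ rfl
  rw [← this, (Finset.mem_filter.1 hσ).2]

/-- The contributions of all facets of all words with first letter `0` cancel modulo `m + 2`:
moving the missing letter to the front turns the sum into `m + 2` copies of one sum. -/
lemma sum_facets (q : Equiv.Perm (Fin (m + 2)) → ZMod (m + 2))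
    (hq : ∀ c σ, q (Equiv.addLeft c * σ) = (sign (Equiv.addLeft c) : ℤ) * q σ) :
    ∑ w : Equiv.Perm (Fin (m + 2)) with w 0 = 0, ((sign w : ℤ) : ZMod (m + 2)) *
      ∑ i : Fin (m + 2), (-1) ^ (i : ℕ) * q (w * i.cycleRange⁻¹) = 0 := by
  set Ψ : Equiv.Perm (Fin (m + 2)) → ZMod (m + 2) := fun σ => ((sign σ : ℤ) : ZMod (m + 2)) * q σ
    with hΨ
  have hinv : ∀ c σ, Ψ (Equiv.addLeft c * σ) = Ψ σ := by
    intro c σ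
    simp only [hΨ, hq, Equiv.Perm.sign_mul, Units.val_mul, Int.cast_mul]
    have : ((sign (Equiv.addLeft c) : ℤ) : ZMod (m + 2)) * (sign (Equiv.addLeft c) : ℤ) = 1 := by
      rw [← Int.cast_mul, ← Units.val_mul, Int.units_mul_self]
      simp
    linear_combination (((sign σ : ℤ) : ZMod (m + 2)) * q σ) * this
  have step : ∀ i : Fin (m + 2), ∑ w : Equiv.Perm (Fin (m + 2)) with w 0 = 0,
      Ψ (w * i.cycleRange⁻¹) = ∑ σ with σ 0 = 0, Ψ σ := by
    intro i
    rw [sum_cyclic Ψ hinv 0 (i.cycleRange 0)]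
    refine Finset.sum_bij' (fun w _ => w * i.cycleRange⁻¹) (fun σ _ => σ * i.cycleRange)
      ?_ ?_ ?_ ?_ ?_ <;> intro σ hσ <;> simp_all
  have expand : ∀ w : Equiv.Perm (Fin (m + 2)), ((sign w : ℤ) : ZMod (m + 2)) *
      ∑ i : Fin (m + 2), (-1) ^ (i : ℕ) * q (w * i.cycleRange⁻¹) =
      ∑ i : Fin (m + 2), Ψ (w * i.cycleRange⁻¹) := by
    intro w
    rw [Finset.mul_sum]
    refine Finset.sum_congr rfl fun i _ => ?_
    simp only [hΨ, Equiv.Perm.sign_mul, sign_inv, Fin.sign_cycleRange]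
    push_cast
    ring
  simp only [expand]
  rw [Finset.sum_comm]
  simp only [step]
  rw [Finset.sum_const, Finset.card_univ, Fintype.card_fin, nsmul_eq_mul]
  have : ((m + 2 : ℕ) : ZMod (m + 2)) = 0 := ZMod.natCast_self _
  rw [this, zero_mul]

/-- The signed number of full simplices over all words with first letter `0` is `(m + 1)!` modulo
`m + 2`. -/
theorem count_full (Φ : List (Fin (m + 2)) → Chain (ZMod (m + 2)) (Fin (m + 2)))
    (h0 : Φ [] = Finsupp.single [] 1)
    (hΦ : ∀ u : List (Fin (m + 2)), u.Nodup → bd (Φ u) = lin Φ (faces u))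
    (hγ : ∀ (c : Fin (m + 2)) (u : List (Fin (m + 2))), u.Nodup →
      Φ (u.map (Equiv.addLeft c)) = mapC (Equiv.addLeft c) (Φ u))
    (hlen : ∀ u, ∀ l ∈ (Φ u).support, l.length = u.length) :
    ∑ w : Equiv.Perm (Fin (m + 2)) with w 0 = 0,
      ((sign w : ℤ) : ZMod (m + 2)) * detC (Φ (List.ofFn w)) = (Nat.factorial (m + 1) : ℕ) := by
  set q : Equiv.Perm (Fin (m + 2)) → ZMod (m + 2) :=
    fun σ => detC (hL Φ (List.ofFn (σ ∘ Fin.succ))) with hq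
  have hnod : ∀ σ : Equiv.Perm (Fin (m + 2)), (List.ofFn (σ ∘ Fin.succ)).Nodup := fun σ =>
    List.nodup_ofFn.2 (σ.injective.comp (Fin.succ_injective _))
  have hqγ : ∀ c σ, q (Equiv.addLeft c * σ) = (sign (Equiv.addLeft c) : ℤ) * q σ := by
    intro c σ
    have : List.ofFn ((Equiv.addLeft c * σ : Equiv.Perm (Fin (m + 2))) ∘ Fin.succ) =
        (List.ofFn (σ ∘ Fin.succ)).map (Equiv.addLeft c) := by
      rw [List.map_ofFn]; rfl
    simp only [hq]
    rw [this, hL_map _ (hγ c) _ (hnod σ), detC_mapC]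
  have hw : ∀ w : Equiv.Perm (Fin (m + 2)), ((sign w : ℤ) : ZMod (m + 2)) *
      detC (Φ (List.ofFn w)) = 1 + ((sign w : ℤ) : ZMod (m + 2)) *
        ∑ i : Fin (m + 2), (-1) ^ (i : ℕ) * q (w * i.cycleRange⁻¹) := by
    intro w
    have h1 := congrArg detC (bd_hL h0 hΦ (List.ofFn w) (List.nodup_ofFn.2 w.injective))
    rw [detC_bd (fun l hl => by rw [hL_length hlen _ l hl]; simp), map_sub, map_sub, detC_single,
      detL_perm, faces_ofFn] at h1
    simp only [map_sum, map_smul, lin_single, smul_eq_mul] at h1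
    have h2 : ∀ i : Fin (m + 2), detC (hL Φ (List.ofFn (w ∘ i.succAbove))) =
        q (w * i.cycleRange⁻¹) := by
      intro i
      simp only [hq]
      congr 3
      ext j
      simp [Equiv.Perm.inv_def]
    simp only [h2] at h1
    have h3 : ((sign w : ℤ) : ZMod (m + 2)) * (sign w : ℤ) = 1 := by
      rw [← Int.cast_mul, ← Units.val_mul, Int.units_mul_self]
      simp
    linear_combination (-((sign w : ℤ) : ZMod (m + 2))) * h1 + h3
  simp only [hw]
  rw [Finset.sum_add_distrib, sum_facets q hqγ, add_zero, Finset.sum_const, card_fix]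
  simp

lemma factorial_ne_zero (h : (m + 2).Prime ∨ m + 2 = 4) :
    ((Nat.factorial (m + 1) : ℕ) : ZMod (m + 2)) ≠ 0 := by
  rw [Ne, ZMod.natCast_eq_zero_iff]
  rcases h with h | h
  · rw [h.dvd_factorial]
    omega
  · obtain rfl : m = 2 := by omega
    decide

end Count

/-! ### Equivariant labels -/

section Labels

variable {m : ℕ}

/-- The left end of the piece named `a`, when pieces named by the letters of `u` and of lengths
given by `y` are laid out in the order of `u`. -/
def leftEnd (y : Fin (m + 2) → ℝ) (a : Fin (m + 2)) : List (Fin (m + 2)) → ℝ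
  | [] => 0
  | b :: u => if a = b then 0 else y b + leftEnd y a u

/-- The piece named `a` in the division described by the word `u` and the lengths `y`. -/
def piece (u : List (Fin (m + 2))) (y : Fin (m + 2) → ℝ) (a : Fin (m + 2)) : Set ℝ :=
  Set.Ioo (leftEnd y a u) (leftEnd y a u + y a)

/-- The set of pieces of nonzero length in the division described by `u` and `y`. -/
def divset (u : List (Fin (m + 2))) (y : Fin (m + 2) → ℝ) : Set (Set ℝ) :=
  {I | ∃ a, y a ≠ 0 ∧ I = piece u y a}

lemma leftEnd_eraseIdx {y : Fin (m + 2) → ℝ} {a : Fin (m + 2)} (ha : y a ≠ 0)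
    (u : List (Fin (m + 2))) (i : ℕ) (hi : i < u.length) (h : y u[i] = 0) :
    leftEnd y a (u.eraseIdx i) = leftEnd y a u := by
  induction u generalizing i with
  | nil => simp at hi
  | cons b u ih =>
    cases i with
    | zero =>
      simp only [List.getElem_cons_zero] at h
      have : a ≠ b := fun e => ha (e ▸ h)
      simp [leftEnd, this, h]
    | succ i =>
      simp only [List.eraseIdx_cons_succ, leftEnd]
      rw [ih i (by simpa using hi) (by simpa using h)]

lemma piece_of_zero {u : List (Fin (m + 2))} {y : Fin (m + 2) → ℝ} {a : Fin (m + 2)}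
    (h : y a = 0) : piece u y a = ∅ := by
  simp [piece, h]

/-- Deleting a name whose piece is empty changes no piece. -/
lemma piece_eraseIdx {u : List (Fin (m + 2))} {y : Fin (m + 2) → ℝ} {i : ℕ} (hi : i < u.length)
    (h : y u[i] = 0) (a : Fin (m + 2)) : piece (u.eraseIdx i) y a = piece u y a := by
  by_cases ha : y a = 0
  · rw [piece_of_zero ha, piece_of_zero ha]
  · rw [piece, piece, leftEnd_eraseIdx ha u i hi h]

lemma leftEnd_map (γ : Equiv.Perm (Fin (m + 2))) (u : List (Fin (m + 2)))
    (y : Fin (m + 2) → ℝ) (a : Fin (m + 2)) :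
    leftEnd (y ∘ γ.symm) (γ a) (u.map γ) = leftEnd y a u := by
  induction u with
  | nil => rfl
  | cons b u ih => simp [leftEnd, ih]

lemma piece_map (γ : Equiv.Perm (Fin (m + 2))) (u : List (Fin (m + 2)))
    (y : Fin (m + 2) → ℝ) (a : Fin (m + 2)) :
    piece (u.map γ) (y ∘ γ.symm) (γ a) = piece u y a := by
  simp [piece, leftEnd_map]

lemma divset_map (γ : Equiv.Perm (Fin (m + 2))) (u : List (Fin (m + 2)))
    (y : Fin (m + 2) → ℝ) : divset (u.map γ) (y ∘ γ.symm) = divset u y := by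
  ext I
  constructor
  · rintro ⟨a, ha, rfl⟩
    obtain ⟨a, rfl⟩ := γ.surjective a
    exact ⟨a, by simpa using ha, piece_map γ u y a⟩
  · rintro ⟨a, ha, rfl⟩
    exact ⟨γ a, by simpa using ha, (piece_map γ u y a).symm⟩

lemma divset_eraseIdx {u : List (Fin (m + 2))} {y : Fin (m + 2) → ℝ} {i : ℕ}
    (hi : i < u.length) (h : y u[i] = 0) : divset (u.eraseIdx i) y = divset u y := by
  simp [divset, piece_eraseIdx hi h]

/-- The name of the leftmost nonempty piece. -/
def anchor (u : List (Fin (m + 2))) (y : Fin (m + 2) → ℝ) : Fin (m + 2) :=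
  (u.find? fun a => decide (y a ≠ 0)).getD 0

lemma anchor_eraseIdx {y : Fin (m + 2) → ℝ} (u : List (Fin (m + 2))) (i : ℕ)
    (hi : i < u.length) (h : y u[i] = 0) : anchor (u.eraseIdx i) y = anchor u y := by
  unfold anchor
  congr 1
  induction u generalizing i with
  | nil => simp at hi
  | cons b u ih =>
    cases i with
    | zero =>
      simp only [List.getElem_cons_zero] at h
      simp [h]
    | succ i =>
      simp only [List.eraseIdx_cons_succ, List.find?_cons]
      rw [ih i (by simpa using hi) (by simpa using h)]

lemma anchor_map (γ : Equiv.Perm (Fin (m + 2))) {u : List (Fin (m + 2))}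
    {y : Fin (m + 2) → ℝ} (h : ∃ a ∈ u, y a ≠ 0) :
    anchor (u.map γ) (y ∘ γ.symm) = γ (anchor u y) := by
  unfold anchor
  obtain ⟨b, hb⟩ : ∃ b, u.find? (fun a => decide (y a ≠ 0)) = some b := by
    rw [← Option.isSome_iff_exists, List.find?_isSome]
    simpa using h
  have : (fun a => decide ((y ∘ γ.symm) a ≠ 0)) ∘ γ = fun a => decide (y a ≠ 0) := by
    ext a; simp
  rw [List.find?_map, this, hb]
  rfl

variable (pick : ℕ → Set (Set ℝ) → Set ℝ)

/-- The label of a coloured point: a name carried by the piece that the player of that colour picks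
in the division. An empty piece may carry several names; the first one counted cyclically from the
anchor is taken, which makes the label equivariant under cyclic relabelling. -/
def lab (u : List (Fin (m + 2))) (a : (Fin (m + 2) → ℝ) × ℕ) : Fin (m + 2) :=
  open Classical in
  anchor u a.1 + if h : ∃ t, piece u a.1 (anchor u a.1 + t) = pick a.2 (divset u a.1) then
    (Finset.univ.filter fun t => piece u a.1 (anchor u a.1 + t) = pick a.2 (divset u a.1)).min'
      (by simpa [Finset.filter_nonempty_iff] using h) else 0

variable {pick}

lemma lab_eraseIdx {u : List (Fin (m + 2))} {a : (Fin (m + 2) → ℝ) × ℕ} {i : ℕ}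
    (hi : i < u.length) (h : a.1 u[i] = 0) : lab pick (u.eraseIdx i) a = lab pick u a := by
  simp only [lab, anchor_eraseIdx u i hi h, piece_eraseIdx hi h, divset_eraseIdx hi h]

lemma lab_map (c : Fin (m + 2)) {u : List (Fin (m + 2))} {a : (Fin (m + 2) → ℝ) × ℕ}
    (h : ∃ b ∈ u, a.1 b ≠ 0) :
    lab pick (u.map (Equiv.addLeft c)) (a.1 ∘ (Equiv.addLeft c).symm, a.2) =
      Equiv.addLeft c (lab pick u a) := by
  have e : ∀ t, piece (u.map (Equiv.addLeft c)) (a.1 ∘ (Equiv.addLeft c).symm)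
      (Equiv.addLeft c (anchor u a.1) + t) = piece u a.1 (anchor u a.1 + t) := by
    intro t
    rw [← piece_map (Equiv.addLeft c) u a.1]
    congr 1
    simp [add_assoc]
  simp only [lab, anchor_map _ h, e, divset_map]
  simp [add_assoc]

lemma lab_spec {u : List (Fin (m + 2))} {y : Fin (m + 2) → ℝ} {k : ℕ}
    (h : ∃ b, piece u y b = pick k (divset u y)) :
    piece u y (lab pick u (y, k)) = pick k (divset u y) := by
  classical
  obtain ⟨b, hb⟩ := h
  have h' : ∃ t, piece u y (anchor u y + t) = pick k (divset u y) := ⟨b - anchor u y, by simpa⟩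
  rw [lab, dif_pos h']
  exact (Finset.mem_filter.1 (Finset.min'_mem (Finset.univ.filter fun t =>
    piece u y (anchor u y + t) = pick k (divset u y)) _)).2

/-- A vertex of the simplex of lengths; the colour of an original vertex is irrelevant. -/
def vert (a : Fin (m + 2)) : (Fin (m + 2) → ℝ) × ℕ := (Pi.single a 1, 0)

variable (pick) in
/-- The chain of label lists of the `s`-fold subdivision of the simplex spanned by the word `u`. -/
def labC (R : Type*) [CommRing R] (s : ℕ) (u : List (Fin (m + 2))) : Chain R (Fin (m + 2)) :=
  mapC (lab pick u) ((sd ^ s) (Finsupp.single (u.map vert) 1))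

variable {R : Type*} [CommRing R]

lemma labC_nil (s : ℕ) : labC pick R s ([] : List (Fin (m + 2))) = Finsupp.single [] 1 := by
  have : ((sd ^ s) (Finsupp.single [] 1) : Chain R ((Fin (m + 2) → ℝ) × ℕ)) =
      Finsupp.single [] 1 := by
    induction s with
    | zero => simp
    | succ s ih => rw [pow_succ', Module.End.mul_apply, ih, sd_single, sdL_nil]
  simp [labC, this]

lemma bd_labC (s : ℕ) (u : List (Fin (m + 2))) (hu : u.Nodup) :
    bd (labC pick R s u) = lin (labC pick R s) (faces u) := by
  rw [labC, ← mapC_bd, bd_sd_pow, bd_single, ← mapC_faces]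
  refine map_faces_congr (φ := mapC (lab pick u) ∘ₗ
    (sd ^ s : Chain R ((Fin (m + 2) → ℝ) × ℕ) →ₗ[R] _) ∘ₗ mapC vert)
    (ψ := lin (labC pick R s)) u fun i hi => ?_
  simp only [LinearMap.comp_apply, mapC_single, lin_single, labC]
  refine mapC_congr _ fun l hl a ha => (lab_eraseIdx hi ?_).symm
  have hK : Convex ℝ {y : Fin (m + 2) → ℝ | y u[i] = 0} := by
    intro x hx y hy a b _ _ _
    simp only [Set.mem_ofPred_eq] at hx hy
    simp [hx, hy]
  refine sd_pow_mem hK s (fun b hb => ?_) hl a ha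
  obtain ⟨c, hc, rfl⟩ := List.mem_map.1 hb
  have hne : u[i] ≠ c := by
    rintro rfl
    rw [List.mem_eraseIdx_iff_getElem] at hc
    obtain ⟨j, hj, hji, e⟩ := hc
    exact hji ((hu.getElem_inj_iff).1 e)
  simp [vert, hne]

lemma labC_map (s : ℕ) (c : Fin (m + 2)) (u : List (Fin (m + 2))) :
    labC pick R s (u.map (Equiv.addLeft c)) = mapC (Equiv.addLeft c) (labC pick R s u) := by
  set γ : Equiv.Perm (Fin (m + 2)) := Equiv.addLeft c with hγ
  set T : (Fin (m + 2) → ℝ) →ₗ[ℝ] (Fin (m + 2) → ℝ) := LinearMap.funLeft ℝ ℝ γ.symm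
  have hv : (u.map γ).map vert = (u.map vert).map (Prod.map T id) := by
    rw [List.map_map, List.map_map]
    refine List.map_congr_left fun a _ => ?_
    refine Prod.ext ?_ rfl
    ext b
    simp [vert, T, LinearMap.funLeft_apply, Pi.single_apply, Equiv.symm_apply_eq]
  rw [labC, hv, ← mapC_single, ← mapC_sd_pow, mapC_mapC, labC, mapC_mapC]
  refine mapC_congr _ fun l hl a ha => ?_
  have hK : Convex ℝ {y : Fin (m + 2) → ℝ | ∑ b, y b = 1 ∧ ∀ b ∉ u, y b = 0} := by
    rintro x ⟨hx, hx'⟩ y ⟨hy, hy'⟩ a b _ _ hab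
    refine ⟨?_, fun d hd => by simp [hx' d hd, hy' d hd]⟩
    simp [Finset.sum_add_distrib, ← Finset.mul_sum, hx, hy, hab]
  have := sd_pow_mem hK s (fun b hb => ?_) hl a ha
  · obtain ⟨h1, h2⟩ := this
    refine lab_map c ?_
    by_contra! hcon
    have : ∑ b, a.1 b = 0 := Finset.sum_eq_zero fun b _ => by
      by_cases hb : b ∈ u
      · exact hcon b hb
      · exact h2 b hb
    linarith
  · obtain ⟨d, hd, rfl⟩ := List.mem_map.1 hb
    refine ⟨by simp [vert], fun b hb => ?_⟩
    have : b ≠ d := fun e => hb (e ▸ hd)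
    simp [vert, this]

/-- Arbitrarily small simplices whose vertices carry all colours and all labels exist. -/
theorem exists_rainbow (h : (m + 2).Prime ∨ m + 2 = 4) (pick : ℕ → Set (Set ℝ) → Set ℝ) (s : ℕ) :
    ∃ (σ : Equiv.Perm (Fin (m + 2))) (z : Fin (m + 2) → Fin (m + 2) → ℝ),
      (∀ k, z k ∈ stdSimplex ℝ (Fin (m + 2))) ∧
      (∀ k k', ‖z k' - z k‖ ≤ (1 - 1 / ((m + 2 : ℕ) : ℝ)) ^ (s + 1) * 2) ∧
      Function.Injective fun k : Fin (m + 2) => lab pick (List.ofFn σ) (z k, k) := by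
  have hcount := count_full (labC pick (ZMod (m + 2)) (s + 1)) (labC_nil _) (bd_labC _)
    (fun c u _ => labC_map _ c u) (fun u l hl => by
      rw [labC, mapC, Finsupp.lmapDomain_apply] at hl
      obtain ⟨t, ht, rfl⟩ := mem_support_mapDomain hl
      simpa using sd_pow_length _ ht)
  obtain ⟨σ, -, hσ⟩ : ∃ σ ∈ Finset.univ.filter fun w : Equiv.Perm (Fin (m + 2)) => w 0 = 0,
      ((Equiv.Perm.sign σ : ℤ) : ZMod (m + 2)) *
        detC (labC pick (ZMod (m + 2)) (s + 1) (List.ofFn σ)) ≠ 0 := by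
    by_contra! hcon
    rw [Finset.sum_eq_zero hcon] at hcount
    exact factorial_ne_zero h hcount.symm
  have hdet := right_ne_zero_of_mul hσ
  obtain ⟨l, hl, hldet⟩ : ∃ l ∈ (labC pick (ZMod (m + 2)) (s + 1) (List.ofFn σ)).support,
      detL (ZMod (m + 2)) l ≠ 0 := by
    by_contra! hcon
    refine hdet ?_
    rw [detC, Finsupp.linearCombination_apply, Finsupp.sum]
    exact Finset.sum_eq_zero fun l hl => by rw [hcon l hl, smul_zero]
  rw [labC, mapC, Finsupp.lmapDomain_apply] at hl
  obtain ⟨t, ht, rfl⟩ := mem_support_mapDomain hl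
  have hlen : t.length = m + 2 := by simpa using sd_pow_length _ ht
  have hcol := sd_pow_colours s ht
  have hnodup := nodup_of_detL_ne_zero (by simpa using hlen) hldet
  have hmem := sd_pow_mem (convex_stdSimplex ℝ (Fin (m + 2))) (s + 1) (fun b hb => by
    obtain ⟨c, hc, rfl⟩ := List.mem_map.1 hb
    exact single_mem_stdSimplex ℝ c) ht
  have hdiam := sd_pow_diam (d := 2) (N := m + 2) (by norm_num) (by simp) (fun a ha b hb => by
    obtain ⟨c, hc, rfl⟩ := List.mem_map.1 ha
    obtain ⟨c', hc', rfl⟩ := List.mem_map.1 hb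
    have : ∀ c : Fin (m + 2), ‖(vert c).1‖ = 1 := fun c => by simp [vert, Pi.norm_single]
    have := norm_sub_le (vert c').1 (vert c).1
    simp_all
    linarith) (s + 1) ht
  have hidx : ∀ k : Fin (m + 2), (Fin.rev k : ℕ) < t.length :=
    fun k => (Fin.rev k).2.trans_eq hlen.symm
  -- The vertices of a subdivided simplex are listed by decreasing colour.
  have hcolk : ∀ k : Fin (m + 2), (t[(Fin.rev k : ℕ)]'(hidx k)).2 = k := by
    intro k
    have h1 : (t.map Prod.snd)[(Fin.rev k : ℕ)]'(by simpa using hidx k) = k := by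
      simp only [hcol]
      simp [Fin.val_rev]
      omega
    simpa using h1
  refine ⟨σ, fun k => (t[(Fin.rev k : ℕ)]'(hidx k)).1, fun k => hmem _ (List.getElem_mem _),
    fun k k' => hdiam _ (List.getElem_mem _) _ (List.getElem_mem _), fun k k' hkk => ?_⟩
  have hz : ∀ k : Fin (m + 2), lab pick (List.ofFn σ) ((t[(Fin.rev k : ℕ)]'(hidx k)).1, k) =
      (t.map (lab pick (List.ofFn σ)))[(Fin.rev k : ℕ)]'(by simpa using hidx k) := by
    intro k
    rw [List.getElem_map]
    congr 1
    exact Prod.ext rfl (hcolk k).symm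
  simp only [hz] at hkk
  have := (hnodup.getElem_inj_iff).1 hkk
  exact Fin.rev_injective (Fin.ext this)

end Labels

/-! ### Divisions and limits -/

section Divisions

variable {n : ℕ}

lemma cut_succ (x : Fin n → ℝ) (j : Fin n) : cut x (j + 1) = cut x j + x j := by
  have : Finset.univ.filter (fun i : Fin n => (i : ℕ) < j + 1) =
      insert j (Finset.univ.filter fun i : Fin n => (i : ℕ) < j) := by
    ext i
    simp only [Finset.mem_filter, Finset.mem_univ, true_and, Finset.mem_insert, Fin.ext_iff]
    omega
  rw [cut, this, Finset.sum_insert (by simp), add_comm, cut]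

lemma cut_mono {x : Fin n → ℝ} (hx : ∀ i, 0 ≤ x i) : Monotone (cut x) := fun a b hab =>
  Finset.sum_le_sum_of_subset_of_nonneg
    (fun i hi => by
      simp only [Finset.mem_filter, Finset.mem_univ, true_and] at hi ⊢
      omega)
    fun i _ _ => hx i

lemma continuous_cut (ℓ : ℕ) : Continuous fun x : Fin n → ℝ => cut x ℓ := by
  unfold cut
  fun_prop

/-- The `j`-th piece of a division, empty when it has length zero. -/
def nth (x : Fin n → ℝ) (j : Fin n) : Set ℝ := Set.Ioo (cut x j) (cut x (j + 1))

lemma nth_eq_empty {x : Fin n → ℝ} {j : Fin n} : nth x j = ∅ ↔ x j ≤ 0 := by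
  rw [nth, Set.Ioo_eq_empty_iff, cut_succ]
  simp

lemma nth_mem {x : Fin n → ℝ} (j : Fin n) : nth x j ∈ insert (∅ : Set ℝ) (pieces x) := by
  rcases le_or_gt (x j) 0 with h | h
  · exact Or.inl (nth_eq_empty.2 h)
  · exact Or.inr ⟨j, h, rfl⟩

/-- Distinct nonempty pieces are distinct as sets, since they are disjoint. -/
lemma nth_inj {x : Fin n → ℝ} (hx : ∀ i, 0 ≤ x i) {j j' : Fin n} (h : nth x j = nth x j') :
    j = j' ∨ nth x j = ∅ := by
  wlog hlt : j < j' generalizing j j'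
  · rcases (not_lt.1 hlt).eq_or_lt with e | hlt'
    · exact Or.inl e.symm
    · rcases this h.symm hlt' with e | e
      · exact Or.inl e.symm
      · exact Or.inr (h.trans e)
  refine Or.inr (Set.eq_empty_of_forall_notMem fun a ha => ?_)
  have ha' := h ▸ ha
  have : cut x (j + 1) ≤ cut x j' := cut_mono hx hlt
  exact absurd (ha.2.trans_le this) ha'.1.not_gt

lemma symmDiff_Ioo_subset (a b c d : ℝ) :
    symmDiff (Set.Ioo a b) (Set.Ioo c d) ⊆ Set.uIcc a c ∪ Set.uIcc b d := by
  rintro t (⟨⟨h1, h2⟩, h3⟩ | ⟨⟨h1, h2⟩, h3⟩)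
  all_goals
    simp only [Set.mem_Ioo, not_and_or, not_lt] at h3
    simp only [Set.mem_union, Set.mem_uIcc]
    rcases h3 with h3 | h3
    · left; grind
    · right; grind

lemma tendsto_nth {x : Fin n → ℝ} {xs : ℕ → Fin n → ℝ} (h : Tendsto xs atTop (nhds x))
    (j : Fin n) : Tendsto (fun k => volume (symmDiff (nth (xs k) j) (nth x j))) atTop (nhds 0) := by
  have hc : ∀ ℓ, Tendsto (fun k => |cut x ℓ - cut (xs k) ℓ|) atTop (nhds 0) := fun ℓ => by
    have := (((continuous_cut ℓ).tendsto x).comp h).const_sub (cut x ℓ)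
    simpa using this.abs
  have h2 := ENNReal.tendsto_ofReal ((hc j).add (hc (j + 1)))
  simp only [add_zero, ENNReal.ofReal_zero] at h2
  refine tendsto_of_tendsto_of_tendsto_of_le_of_le tendsto_const_nhds h2 (fun _ => zero_le)
    fun k => ?_
  refine (measure_mono (symmDiff_Ioo_subset _ _ _ _)).trans ((measure_union_le _ _).trans ?_)
  rw [Real.volume_interval, Real.volume_interval,
    ← ENNReal.ofReal_add (abs_nonneg _) (abs_nonneg _)]

variable {m : ℕ}

lemma leftEnd_ofFn (y : Fin (m + 2) → ℝ) {k : ℕ} (f : Fin k → Fin (m + 2))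
    (hf : Function.Injective f) (j : Fin k) :
    leftEnd y (f j) (List.ofFn f) = cut (y ∘ f) j := by
  induction k with
  | zero => exact j.elim0
  | succ k ih =>
    rw [List.ofFn_succ, leftEnd]
    induction j using Fin.cases with
    | zero => simp [cut]
    | succ j =>
      rw [if_neg (fun e => Fin.succ_ne_zero j (hf e)),
        ih (fun i => f i.succ) (fun a b e => Fin.succ_injective _ (hf e)) j]
      simp only [cut, Finset.sum_filter, Fin.sum_univ_succ]
      simp

/-- A named division whose names are ordered by `σ` is an ordinary division. -/
lemma piece_ofFn (y : Fin (m + 2) → ℝ) (σ : Equiv.Perm (Fin (m + 2))) (j : Fin (m + 2)) :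
    piece (List.ofFn σ) y (σ j) = nth (y ∘ σ) j := by
  rw [piece, leftEnd_ofFn y σ σ.injective, nth, cut_succ]
  rfl

lemma divset_ofFn {y : Fin (m + 2) → ℝ} (hy : ∀ a, 0 ≤ y a) (σ : Equiv.Perm (Fin (m + 2))) :
    divset (List.ofFn σ) y = pieces (y ∘ σ) := by
  ext I
  constructor
  · rintro ⟨a, ha, rfl⟩
    obtain ⟨j, rfl⟩ := σ.surjective a
    exact ⟨j, (hy _).lt_of_ne' ha, piece_ofFn y σ j⟩
  · rintro ⟨j, hj, rfl⟩
    exact ⟨σ j, hj.ne', (piece_ofFn y σ j).symm⟩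

end Divisions

/-- Envy-free cake division without the hungry-players assumption, for n prime or n = 4:
if each player i has a preference function p_i assigning to each division x ∈ Δ^{n-1} a
nonempty subset of D(x) ∪ {∅}, depending only on the division D(x), satisfying the closed
preferences assumption (with respect to the symmetric difference (pseudo)metric given by
the Lebesgue measure `volume`) and the full division assumption, then an envy-free
division exists. -/
theorem envy_free_division {n : ℕ} (hn : 1 ≤ n) (hprime : Nat.Prime n ∨ n = 4)
    (p : Fin n → (Fin n → ℝ) → Set (Set ℝ))
    (hsub : ∀ i, ∀ x ∈ stdSimplex ℝ (Fin n), p i x ⊆ insert ∅ (pieces x))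
    (hne : ∀ i, ∀ x ∈ stdSimplex ℝ (Fin n), (p i x).Nonempty)
    (hinv : ∀ i, ∀ x ∈ stdSimplex ℝ (Fin n), ∀ y ∈ stdSimplex ℝ (Fin n),
      pieces x = pieces y → p i x = p i y)
    (hclosed : ∀ i, ∀ x ∈ stdSimplex ℝ (Fin n), ∀ xs : ℕ → (Fin n → ℝ),
      (∀ k, xs k ∈ stdSimplex ℝ (Fin n)) → Tendsto xs atTop (nhds x) →
      ∀ P ∈ insert (∅ : Set ℝ) (pieces x), ∀ Ps : ℕ → Set ℝ,
        (∀ k, Ps k ∈ p i (xs k)) →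
        Tendsto (fun k => volume (symmDiff (Ps k) P)) atTop (nhds 0) →
        P ∈ p i x)
    (hfull : ∀ i, ∀ x ∈ stdSimplex ℝ (Fin n), (∀ j, 0 < x j) → (∅ : Set ℝ) ∉ p i x) :
    ∃ x ∈ stdSimplex ℝ (Fin n), ∃ π : Fin n → Set ℝ,
      (∀ i, π i ∈ p i x) ∧
      (∀ I ∈ pieces x, ∃ i, π i = I) ∧
      (∀ i i', π i = π i' → i = i' ∨ π i = ∅) := by
  obtain ⟨m, rfl⟩ : ∃ m, n = m + 2 := by
    have : 2 ≤ n := by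
      rcases hprime with h | h
      · exact h.two_le
      · omega
    exact ⟨n - 2, by omega⟩
  classical
  -- By invariance, a player's choice may be taken to depend on the set of pieces only.
  let pick : ℕ → Set (Set ℝ) → Set ℝ := fun k D =>
    if h : ∃ x ∈ stdSimplex ℝ (Fin (m + 2)), pieces x = D then
      (hne (Fin.ofNat (m + 2) k) h.choose h.choose_spec.1).some else ∅
  have hpick : ∀ i : Fin (m + 2), ∀ x ∈ stdSimplex ℝ (Fin (m + 2)), pick i (pieces x) ∈ p i x := by
    intro i x hx
    have h : ∃ x' ∈ stdSimplex ℝ (Fin (m + 2)), pieces x' = pieces x := ⟨x, hx, rfl⟩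
    have hi : Fin.ofNat (m + 2) i = i := by simp
    have hs := (hne (Fin.ofNat (m + 2) i) h.choose h.choose_spec.1).some_mem
    have hd : pick i (pieces x) = (hne (Fin.ofNat (m + 2) i) h.choose h.choose_spec.1).some :=
      dif_pos h
    rw [← hd, hi, hinv i _ h.choose_spec.1 x hx h.choose_spec.2] at hs
    exact hs
  have hstep : ∀ s : ℕ, ∃ (j : Equiv.Perm (Fin (m + 2))) (xs : Fin (m + 2) → Fin (m + 2) → ℝ),
      (∀ i, xs i ∈ stdSimplex ℝ (Fin (m + 2))) ∧ (∀ i, nth (xs i) (j i) ∈ p i (xs i)) ∧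
      ∀ i i', dist (xs i') (xs i) ≤ (1 - 1 / ((m + 2 : ℕ) : ℝ)) ^ (s + 1) * 2 := by
    intro s
    obtain ⟨σ, z, hz, hd, hinj⟩ := exists_rainbow hprime pick s
    have hx : ∀ i, z i ∘ σ ∈ stdSimplex ℝ (Fin (m + 2)) := fun i =>
      ⟨fun a => (hz i).1 _, (Equiv.sum_comp σ (z i)).trans (hz i).2⟩
    have hlab : ∀ i : Fin (m + 2), piece (List.ofFn σ) (z i) (lab pick (List.ofFn σ) (z i, i)) ∈
        p i (z i ∘ σ) := by
      intro i
      rw [lab_spec, divset_ofFn (hz i).1]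
      · exact hpick i _ (hx i)
      rw [divset_ofFn (hz i).1]
      have hP := hpick i _ (hx i)
      rcases hsub i _ (hx i) hP with he | ⟨j, -, hj⟩
      · -- The empty piece is only picked when some piece has length zero.
        obtain ⟨j, hj⟩ : ∃ j, ¬ 0 < (z i ∘ σ) j := by
          by_contra! hcon
          exact hfull i _ (hx i) hcon (he ▸ hP)
        exact ⟨σ j, he ▸ piece_of_zero (le_antisymm (not_lt.1 hj) ((hz i).1 _))⟩
      · exact ⟨σ j, (piece_ofFn _ σ j).trans hj.symm⟩
    refine ⟨Equiv.ofBijective (fun i : Fin (m + 2) => σ.symm (lab pick (List.ofFn σ) (z i, i)))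
      (Finite.injective_iff_bijective.1 (σ.symm.injective.comp hinj)), fun i => z i ∘ σ, hx,
      fun i => ?_, fun i i' => ?_⟩
    · rw [← piece_ofFn]
      simpa using hlab i
    · refine le_trans ((dist_pi_le_iff dist_nonneg).2 fun a => ?_)
        ((dist_eq_norm (z i') (z i)).trans_le (hd i i'))
      exact dist_le_pi_dist (z i') (z i) (σ a)
  choose j xs hxs hp hd using hstep
  -- Some assignment of pieces to players occurs infinitely often.
  obtain ⟨τ, hτ⟩ : ∃ τ, (j ⁻¹' {τ}).Infinite := by
    by_contra! hcon
    refine Set.infinite_univ (α := ℕ) ?_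
    have : (Set.univ : Set ℕ) = ⋃ τ, j ⁻¹' {τ} := by ext; simp
    rw [this]
    exact Set.finite_iUnion fun τ => hcon τ
  let e := Nat.nth fun s => s ∈ j ⁻¹' {τ}
  have he : StrictMono e := Nat.nth_strictMono hτ
  have hje : ∀ s, j (e s) = τ := fun s => Nat.nth_mem_of_infinite hτ s
  obtain ⟨x, hx, f, hf, hlim⟩ := (isCompact_stdSimplex ℝ (Fin (m + 2))).tendsto_subseq
    fun s => hxs (e s) 0
  have hef := he.comp hf
  have hsmall : Tendsto (fun s : ℕ => (1 - 1 / ((m + 2 : ℕ) : ℝ)) ^ (s + 1) * 2) atTop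
      (nhds 0) := by
    have h1 : (1 : ℝ) / ((m + 2 : ℕ) : ℝ) ≤ 1 := by
      rw [div_le_one (by positivity)]
      exact_mod_cast Nat.succ_le_of_lt (by omega)
    have h2 : (0 : ℝ) < 1 / ((m + 2 : ℕ) : ℝ) := by positivity
    have := ((tendsto_pow_atTop_nhds_zero_of_lt_one (r := 1 - 1 / ((m + 2 : ℕ) : ℝ))
      (by linarith) (by linarith)).comp (tendsto_add_atTop_nat 1)).mul_const 2
    simpa using this
  have hlim' : ∀ i, Tendsto (fun s => xs (e (f s)) i) atTop (nhds x) := by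
    intro i
    refine hlim.congr_dist ?_
    exact squeeze_zero (fun _ => dist_nonneg) (fun s => hd (e (f s)) i 0)
      (hsmall.comp hef.tendsto_atTop)
  refine ⟨x, hx, fun i => nth x (τ i), fun i => ?_, ?_, fun i i' h => ?_⟩
  · refine hclosed i x hx _ (fun s => hxs (e (f s)) i) (hlim' i) _ (nth_mem _)
      (fun s => nth (xs (e (f s)) i) (τ i)) (fun s => ?_) (tendsto_nth (hlim' i) _)
    have := hp (e (f s)) i
    rwa [hje] at this
  · rintro I ⟨a, -, rfl⟩
    exact ⟨τ.symm a, by simp [nth]⟩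
  · exact (nth_inj hx.1 h).imp_left fun e => τ.injective e
end
end

section
/- Let n be a prime number, let T be a nice triangulation of Δ^{n−1}, and let Λ be a nice labeling of the vertices of T such that Λ(v) is a nonempty proper subset of [n] for every vertex v of T. Then there exists an (n−1)-dimensional simplex τ ∈ T with vertex set {u_1,…,u_n} and pairwise distinct elements ℓ_1,…,ℓ_n of [n] such that ℓ_k ∈ Λ(u_k) for every k ∈ [n]. -/
/-!
The proof is a degree argument on piecewise linear maps, carried out with determinants. Write
`n = m + 1` and, for a map `F` from the vertices of `T` to the vectors of `A^n` with coordinate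
sum `1`, let `total F = ∑ sign (det u) * det (F ∘ u)`, the sum over the top-dimensional faces `u`
of `T`. This is the degree of `F`, each face being oriented by its position in the simplex.

* Stokes formula (`total_sub`). `total G - total F` is the sum, over the codimension-one faces `w`
  in the boundary, of the signed determinant sum `prism F G w` of a triangulated prism over `w`
  joining `F` to `G`: interior codimension-one faces cancel because they have exactly one coface on
  either side (`cof_unique`, `exists_cof_side`). The prisms are triangulated with the help of an
  order on the vertices; the lexicographic order is used because `r^j` preserves it on the
  hyperplane `x 0 = 0` (`rmap_lex`).
* Normalization. The identity has degree `1` over `ℝ`, by comparing volumes (`total_id`). The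
  Sperner map `v ↦ e_i`, with `i` the least element of the support of `v`, preserves every facet,
  so its prisms over the facets are degenerate and its degree is also `1`. It is integral, so
  this holds over every ring (`total_sperner`).
* Symmetry. If `F` and `G` are both compatible with the maps `r^j`, niceness of `T` makes all `n`
  facets contribute the same amount, so `total F = total G` whenever `n = 0` in `A`
  (`total_eq_of_equivariant`).

Take `A = ZMod n`, with `n` prime. A nonempty proper subset of `[n]` has cardinality invertible in
`A`, so `F v = |Λ v|⁻¹ ∑_{i ∈ Λ v} e_i` makes sense, has coordinate sum `1`, and is equivariant
because `Λ` is nice; the Sperner map is equivariant too. Hence `total F = 1 ≠ 0`, some face `u` has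
`det (F ∘ u) ≠ 0`, and a nonzero term of the Leibniz expansion of this determinant is a system of
distinct representatives for the label sets of the vertices of `u`.
-/

open scoped Classical
noncomputable section

/-- The permutation ρ^j of `Fin n` (0-indexed): it sends 0 to j, i to i-1 for 1 ≤ i ≤ j,
and fixes i for i > j. -/
def rho {n : ℕ} (j : Fin n) : Equiv.Perm (Fin n) := (Fin.cycleRange j)⁻¹

/-- The linear self-map r^j of ℝ^n, defined by r^j(e_i) = e_{ρ^j(i)}. -/
def rmap {n : ℕ} (j : Fin n) (x : Fin n → ℝ) : Fin n → ℝ := fun i => x ((rho j).symm i)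

/-- A triangulation of the standard simplex Δ^{n-1}: a finite geometric simplicial complex
consisting of (n-1)-dimensional simplices and their faces, whose underlying space is
the standard simplex. -/
structure Triangulation (n : ℕ) where
  complex : Geometry.SimplicialComplex ℝ (Fin n → ℝ)
  finite : complex.faces.Finite
  space_eq : complex.space = stdSimplex ℝ (Fin n)
  pure : ∀ σ ∈ complex.faces, ∃ τ ∈ complex.faces, σ ⊆ τ ∧ τ.card = n

/-- A triangulation is nice if r^j(σ) is a face for every j and every face σ
contained in the 1̂-facet. -/
def Triangulation.IsNice {n : ℕ} [NeZero n] (T : Triangulation n) : Prop :=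
  ∀ j : Fin n, ∀ σ ∈ T.complex.faces, (∀ x ∈ σ, x 0 = 0) →
    σ.image (rmap j) ∈ T.complex.faces

/-- A labeling Λ of the vertices of T by subsets of [n] is nice if
Λ(r^j(v)) = ρ^j(Λ(v)) for every j and every vertex v in the 1̂-facet. -/
def NiceLabeling {n : ℕ} [NeZero n] (T : Triangulation n) (Λ : (Fin n → ℝ) → Finset (Fin n)) : Prop :=
  ∀ j : Fin n, ∀ v ∈ T.complex.vertices, v 0 = 0 →
    Λ (rmap j v) = (Λ v).image (rho j)

/-! ### Prisms and the homotopy formula -/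

/-- Cramer's form of the affine dependency among `m + 2` vectors of `A^(m+1)` with
coordinate sum `1`. -/
lemma sum_det_succAbove {A : Type*} [CommRing A] [IsDomain A] {m : ℕ}
    (Q : Fin (m + 2) → Fin (m + 1) → A) (hQ : ∀ t, ∑ i, Q t i = 1) :
    ∑ k : Fin (m + 2), (-1) ^ (k : ℕ) * (Matrix.of fun t => Q (k.succAbove t)).det = 0 := by
  let M : Matrix (Fin (m + 2)) (Fin (m + 2)) A := Matrix.of fun t => Fin.cons 1 (Q t)
  have h0 : M.det = 0 := by
    apply Matrix.exists_mulVec_eq_zero_iff.1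
    refine ⟨Fin.cons 1 (fun _ => -1), fun h => by simpa using congrFun h 0, ?_⟩
    funext t
    simp [M, Matrix.mulVec, dotProduct, Fin.sum_univ_succ (n := m + 1), hQ]
  rw [Matrix.det_succ_column_zero] at h0
  rw [← h0]
  refine Finset.sum_congr rfl fun k _ => ?_
  simp only [M, Matrix.of_apply, Fin.cons_zero, mul_one]
  congr 1

lemma val_succAbove {n : ℕ} (k : Fin (n + 1)) (i : Fin n) :
    ((k.succAbove i : Fin (n + 1)) : ℕ) = if (i : ℕ) < k then (i : ℕ) else i + 1 := by
  simp only [Fin.succAbove, Fin.lt_def, Fin.val_castSucc]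
  split_ifs <;> simp

lemma val_predAbove {n : ℕ} (i : Fin n) (t : Fin (n + 1)) :
    ((i.predAbove t : Fin n) : ℕ) = if (i : ℕ) < t then (t : ℕ) - 1 else t := by
  simp only [Fin.predAbove, Fin.lt_def, Fin.val_castSucc]
  split_ifs <;> simp

section prism
variable {A E : Type*} {m : ℕ}

/-- The `i`-th simplex `f w₀, …, f wᵢ, g wᵢ, …, g w_{m-1}` of the prism joining the images of an
ordered `m`-tuple under `f` and under `g`. -/
def prismRow (f g : E → Fin (m + 1) → A) {k : ℕ} (i : Fin k) (w : Fin k → E)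
    (t : Fin (k + 1)) : Fin (m + 1) → A :=
  if t ≤ i.castSucc then f (w (i.predAbove t)) else g (w (i.predAbove t))

/-- The alternating sum of the determinants of the simplices of the prism over `w`. -/
def prism [CommRing A] (f g : E → Fin (m + 1) → A) (w : Fin m → E) : A :=
  ∑ i : Fin m, (-1) ^ (i : ℕ) * (Matrix.of (prismRow f g i w)).det

lemma prismRow_comp (f g : E → Fin (m + 1) → A) (u : Fin (m + 1) → E) (k : Fin (m + 1))
    (i : Fin m) (t : Fin (m + 1)) :
    prismRow f g (k.succAbove i) u
      (((k.succAbove i).castSucc.succAbove k).succAbove t) =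
    prismRow f g i (fun s => u (k.succAbove s)) t := by
  have h1 : (((k.succAbove i).castSucc.succAbove k).succAbove t ≤ (k.succAbove i).castSucc)
      ↔ t ≤ i.castSucc := by
    simp only [Fin.le_def, val_succAbove, Fin.val_castSucc]
    split_ifs <;> omega
  have h2 : (k.succAbove i).predAbove (((k.succAbove i).castSucc.succAbove k).succAbove t) =
      k.succAbove (i.predAbove t) := by
    simp only [Fin.ext_iff, val_succAbove, val_predAbove, Fin.val_castSucc]
    split_ifs <;> omega
  simp only [prismRow, h1, h2]

/-- Homotopy formula: the difference of the two ends of a prism is its lateral boundary. -/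
lemma prism_identity [CommRing A] [IsDomain A] (f g : E → Fin (m + 1) → A) (u : Fin (m + 1) → E)
    (hf : ∀ t, ∑ i, f (u t) i = 1) (hg : ∀ t, ∑ i, g (u t) i = 1) :
    (Matrix.of fun t => g (u t)).det - (Matrix.of fun t => f (u t)).det =
      ∑ k : Fin (m + 1), (-1) ^ (k : ℕ) * prism f g (fun s => u (k.succAbove s)) := by
  -- `H i` belongs to the tuple `f u₀, …, f u_{i-1}, g u_i, …, g u_m`, and `F i k` to the `k`-th face
  -- of the `i`-th simplex of the prism over `u`
  let H : ℕ → A := fun i => (Matrix.of fun t : Fin (m + 1) =>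
    if (t : ℕ) < i then f (u t) else g (u t)).det
  let F : Fin (m + 1) → Fin (m + 2) → A := fun i k =>
    (-1) ^ (k : ℕ) * (Matrix.of fun t => prismRow f g i u (k.succAbove t)).det
  have hF : ∀ i, ∑ k, F i k = 0 := fun i => sum_det_succAbove _ fun t => by
    unfold prismRow; split_ifs
    exacts [hf _, hg _]
  have e1 : ∀ i, F i i.castSucc = (-1) ^ (i : ℕ) * H i := by
    intro i
    change (-1) ^ (i : ℕ) * Matrix.det _ = _ * Matrix.det _
    congr 3
    funext t
    have h1 : i.castSucc.succAbove t ≤ i.castSucc ↔ (t : ℕ) < i := by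
      simp only [Fin.le_def, val_succAbove, Fin.val_castSucc]
      split_ifs <;> omega
    have h2 : i.predAbove (i.castSucc.succAbove t) = t := by
      simp
    simp only [prismRow, h1, h2]
  have e2 : ∀ i, F i (i.castSucc.succAbove i) = -((-1) ^ (i : ℕ) * H (i + 1)) := by
    intro i
    have : (fun t => prismRow f g i u (i.succ.succAbove t)) =
        fun t : Fin (m + 1) => if (t : ℕ) < i + 1 then f (u t) else g (u t) := by
      funext t
      have h1 : i.succ.succAbove t ≤ i.castSucc ↔ (t : ℕ) < i + 1 := by
        simp only [Fin.le_def, val_succAbove, Fin.val_castSucc, Fin.val_succ]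
        split_ifs <;> omega
      have h2 : i.predAbove (i.succ.succAbove t) = t := by
        simp only [Fin.ext_iff, val_succAbove, val_predAbove, Fin.val_succ]
        split_ifs <;> omega
      simp only [prismRow, h1, h2]
    simp only [Fin.succAbove_castSucc_self, F, H, Fin.val_succ, this]
    ring
  have e3 : ∀ (k : Fin (m + 1)) (i : Fin m), (-1) ^ ((k.succAbove i : Fin (m + 1)) : ℕ) *
      F (k.succAbove i) ((k.succAbove i).castSucc.succAbove k) =
      -((-1) ^ (k : ℕ) * ((-1) ^ (i : ℕ) *
        (Matrix.of (prismRow f g i (fun s => u (k.succAbove s)))).det)) := by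
    intro k i
    simp only [F]
    have : (fun t => prismRow f g (k.succAbove i) u
      (((k.succAbove i).castSucc.succAbove k).succAbove t)) =
      prismRow f g i (fun s => u (k.succAbove s)) := funext (prismRow_comp f g u k i)
    rw [this, ← mul_assoc, ← mul_assoc, ← neg_mul, ← pow_add, ← pow_add]
    congr 1
    have : (((k.succAbove i : Fin (m + 1)) : ℕ) + (((k.succAbove i).castSucc.succAbove k : Fin (m+2)) : ℕ))
      = k + i + 1 := by
      simp only [val_succAbove, Fin.val_castSucc]
      split_ifs <;> omega
    rw [this, pow_succ, mul_neg_one]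
  -- two faces of the `i`-th simplex contribute to a telescoping sum, the others are lateral
  have hsum : ∀ i, H (i : Fin (m + 1)) - H (i + 1) +
      ∑ k, (if k = i then 0 else (-1) ^ (i : ℕ) * F i (i.castSucc.succAbove k)) = 0 := by
    intro i
    have h := congrArg ((-1 : A) ^ (i : ℕ) * ·) (hF i)
    simp only [mul_zero] at h
    rw [Fin.sum_univ_succAbove _ i.castSucc, ← Finset.add_sum_erase _ _ (Finset.mem_univ i),
      e1, e2, mul_add, mul_add, mul_neg, ← mul_assoc, ← mul_assoc, ← pow_add, Even.neg_one_pow ⟨_, rfl⟩,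
      one_mul, one_mul, ← add_assoc, Finset.mul_sum] at h
    rw [← Finset.add_sum_erase Finset.univ (fun k => if k = i then (0 : A) else _)
      (Finset.mem_univ i), if_pos rfl, zero_add, sub_eq_add_neg]
    refine Eq.trans ?_ h
    congr 1
    exact Finset.sum_congr rfl fun k hk => if_neg (Finset.ne_of_mem_erase hk)
  have htot := Finset.sum_eq_zero (s := Finset.univ) fun i _ => hsum i
  rw [Finset.sum_add_distrib, Fin.sum_univ_eq_sum_range (fun i => H i - H (i + 1)) (m + 1),
    Finset.sum_range_sub', Finset.sum_comm] at htot
  have hk : ∀ k : Fin (m + 1),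
      ∑ i, (if k = i then 0 else (-1) ^ (i : ℕ) * F i (i.castSucc.succAbove k)) =
      -((-1) ^ (k : ℕ) * prism f g (fun s => u (k.succAbove s))) := by
    intro k
    rw [Fin.sum_univ_succAbove _ k, if_pos rfl, zero_add, prism, Finset.mul_sum,
      ← Finset.sum_neg_distrib]
    refine Finset.sum_congr rfl fun i _ => ?_
    rw [if_neg (Fin.succAbove_ne k i).symm, e3]
  simp only [hk, Finset.sum_neg_distrib] at htot
  have h0 : H 0 = (Matrix.of fun t => g (u t)).det := by simp [H]
  have h1 : H (m + 1) = (Matrix.of fun t => f (u t)).det := by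
    simp only [H]; congr 2; funext t; rw [if_pos t.isLt]
  rw [h0, h1] at htot
  linear_combination htot

end prism

/-! ### The maps `r^j` and the lexicographic order -/

section rmap
variable {m : ℕ}

lemma rmap_apply (j : Fin (m + 1)) (x : Fin (m + 1) → ℝ) (i : Fin (m + 1)) :
    rmap j x i = x (Fin.cycleRange j i) := rfl

lemma rho_symm (j : Fin (m + 1)) : (rho j).symm = Fin.cycleRange j := rfl

lemma rmap_self (j : Fin (m + 1)) (x : Fin (m + 1) → ℝ) : rmap j x j = x 0 := by
  rw [rmap_apply, Fin.cycleRange_self]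

lemma rmap_eq_funLeft (j : Fin (m + 1)) :
    rmap j = LinearMap.funLeft ℝ ℝ (Fin.cycleRange j) := rfl

lemma rmap_injective (j : Fin (m + 1)) : Function.Injective (rmap j) := fun x y h => by
  funext i
  simpa [rmap_apply] using congrFun h ((Fin.cycleRange j).symm i)

/-- `ρ^j` is increasing on the indices different from `0`, stated through its inverse: an index
below `ρ^j i` is the image of `0` or of an index below `i`. -/
lemma cycleRange_lt_of_lt_rho {j i k : Fin (m + 1)} (hi : i ≠ 0) (hk : k < rho j i) :
    Fin.cycleRange j k = 0 ∨ Fin.cycleRange j k < i := by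
  have hv : ∀ a : Fin (m + 1), ((Fin.cycleRange j a : Fin (m + 1)) : ℕ) =
      if (a : ℕ) < j then (a : ℕ) + 1 else if (a : ℕ) = j then 0 else a := by
    intro a
    rcases lt_trichotomy a j with h | h | h
    · have h' : (a : ℕ) < j := h
      rw [Fin.coe_cycleRange_of_lt h, if_pos h']
    · subst h; simp
    · have h' : (j : ℕ) < a := h
      rw [Fin.cycleRange_of_gt h, if_neg (by omega), if_neg (by omega)]
  have h1 := hv (rho j i)
  have h2 : Fin.cycleRange j (rho j i) = i := (Fin.cycleRange j).apply_symm_apply i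
  rw [h2] at h1
  have h3 := hv k
  have hk' : (k : ℕ) < rho j i := hk
  have hi' : (i : ℕ) ≠ 0 := fun h => hi (Fin.ext h)
  rw [Fin.ext_iff, Fin.lt_def, Fin.val_zero]
  split_ifs at h1 h3 <;> omega

/-- `r^j` is strictly increasing for the lexicographic order on the hyperplane `x 0 = 0`. -/
lemma rmap_lex {j : Fin (m + 1)} {x y : Fin (m + 1) → ℝ} (hx : x 0 = 0) (hy : y 0 = 0)
    (h : toLex x < toLex y) : toLex (rmap j x) < toLex (rmap j y) := by
  obtain ⟨i, hlt, hi⟩ := h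
  change ∀ k, k < i → x k = y k at hlt
  change x i < y i at hi
  have hi0 : i ≠ 0 := by rintro rfl; simp [hx, hy] at hi
  have h2 : Fin.cycleRange j (rho j i) = i := (Fin.cycleRange j).apply_symm_apply i
  refine ⟨rho j i, fun k hk => ?_, ?_⟩
  · change x (Fin.cycleRange j k) = y (Fin.cycleRange j k)
    rcases cycleRange_lt_of_lt_rho hi0 hk with h | h
    · rw [h, hx, hy]
    · exact hlt _ h
  · change x (Fin.cycleRange j _) < y (Fin.cycleRange j _)
    rwa [h2]

lemma rmap_lex_iff {j : Fin (m + 1)} {x y : Fin (m + 1) → ℝ} (hx : x 0 = 0) (hy : y 0 = 0) :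
    toLex (rmap j x) < toLex (rmap j y) ↔ toLex x < toLex y := by
  refine ⟨fun h => ?_, rmap_lex hx hy⟩
  rcases lt_trichotomy (toLex x) (toLex y) with h' | h' | h'
  · exact h'
  · rw [toLex.injective h'] at h; exact absurd h (lt_irrefl _)
  · exact absurd h (rmap_lex hy hx h').asymm

/-- The Sperner label of `x`: the smallest element of its support (`0` if `x = 0`). -/
def minSupp (x : Fin (m + 1) → ℝ) : Fin (m + 1) := sInf {i | x i ≠ 0}

lemma minSupp_spec {x : Fin (m + 1) → ℝ} (hx : x ≠ 0) :
    x (minSupp x) ≠ 0 ∧ ∀ k < minSupp x, x k = 0 := by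
  have hne : {i | x i ≠ 0}.Nonempty := Function.ne_iff.1 hx
  refine ⟨csInf_mem hne, fun k hk => ?_⟩
  by_contra h
  exact absurd (csInf_le' (s := {i | x i ≠ 0}) h) (not_le.2 hk)

lemma minSupp_eq {x : Fin (m + 1) → ℝ} {i : Fin (m + 1)} (h1 : x i ≠ 0)
    (h2 : ∀ k < i, x k = 0) : minSupp x = i := by
  have hs := minSupp_spec (x := x) (fun h => h1 (by simp [h]))
  rcases lt_trichotomy (minSupp x) i with h | h | h
  · exact absurd (h2 _ h) hs.1
  · exact h
  · exact absurd (hs.2 _ h) h1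

lemma minSupp_rmap (j : Fin (m + 1)) {x : Fin (m + 1) → ℝ} (hx : x ≠ 0) (h0 : x 0 = 0) :
    minSupp (rmap j x) = rho j (minSupp x) := by
  have hs := minSupp_spec hx
  have hne : minSupp x ≠ 0 := fun h => hs.1 (by rw [h, h0])
  have h2 : Fin.cycleRange j (rho j (minSupp x)) = minSupp x :=
    (Fin.cycleRange j).apply_symm_apply _
  refine minSupp_eq (by rw [rmap_apply, h2]; exact hs.1) fun k hk => ?_
  rw [rmap_apply]
  rcases cycleRange_lt_of_lt_rho hne hk with h | h
  · rw [h, h0]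
  · exact hs.2 _ h

end rmap

/-! ### The hyperplane of a codimension-one face -/

section geometry
variable {m : ℕ}

/-- The linear form `x ↦ det (x, w₀, …, w_{m-1})`. -/
def ell (w : Fin m → Fin (m + 1) → ℝ) : (Fin (m + 1) → ℝ) →ₗ[ℝ] ℝ :=
  (Matrix.detRowAlternating (n := Fin (m + 1)) (R := ℝ)).toMultilinearMap.toLinearMap
    (Fin.cons 0 w) 0

lemma ell_apply (w : Fin m → Fin (m + 1) → ℝ) (x : Fin (m + 1) → ℝ) :
    ell w x = (Matrix.of (Fin.cons x w : Fin (m + 1) → Fin (m + 1) → ℝ)).det := by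
  change Matrix.det (Function.update (Fin.cons 0 w : Fin (m + 1) → Fin (m + 1) → ℝ) 0 x) = _
  rw [Fin.update_cons_zero]
  rfl

lemma ell_vertex (w : Fin m → Fin (m + 1) → ℝ) (i : Fin m) : ell w (w i) = 0 := by
  rw [ell_apply]
  exact Matrix.det_zero_of_row_eq (i := 0) (j := i.succ) (Fin.succ_ne_zero i).symm rfl

lemma ell_span (w : Fin m → Fin (m + 1) → ℝ) {x : Fin (m + 1) → ℝ}
    (hx : x ∈ Submodule.span ℝ (Set.range w)) : ell w x = 0 := by
  have : Submodule.span ℝ (Set.range w) ≤ LinearMap.ker (ell w) := by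
    rw [Submodule.span_le]
    rintro _ ⟨i, rfl⟩
    exact ell_vertex w i
  exact this hx

/-- If `w` lies in the hyperplane `x j = 0`, then `ell w` is a multiple of `x ↦ x j`. -/
lemma ell_facet {w : Fin m → Fin (m + 1) → ℝ} {j : Fin (m + 1)} (hw : ∀ i, w i j = 0)
    (x : Fin (m + 1) → ℝ) : ell w x = x j * ell w (Pi.single j 1) := by
  have h : ell w (x - x j • Pi.single j 1) = 0 := by
    rw [ell_apply]
    refine Matrix.det_eq_zero_of_column_eq_zero j fun i => ?_
    refine Fin.cases ?_ (fun i => ?_) i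
    · simp
    · simpa using hw i
  rw [map_sub, map_smul, smul_eq_mul] at h
  linarith

lemma det_eq_ell (u : Fin (m + 1) → Fin (m + 1) → ℝ) (k : Fin (m + 1)) :
    (Matrix.of u).det = (-1) ^ (k : ℕ) * ell (fun i => u (k.succAbove i)) (u k) := by
  have h := Fin.cons_removeNth_eq_comp_cycleRange_symm u k
  rw [ell_apply]
  have h2 : (Fin.cons (u k) (fun i => u (k.succAbove i)) : Fin (m + 1) → Fin (m + 1) → ℝ) =
    u ∘ (Fin.cycleRange k).symm := h
  rw [h2]
  have := Matrix.det_permute (Fin.cycleRange k).symm (Matrix.of u)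
  rw [show Matrix.of (u ∘ (Fin.cycleRange k).symm) =
    (Matrix.of u).submatrix (Fin.cycleRange k).symm id from rfl, this, Equiv.Perm.sign_symm,
    Fin.sign_cycleRange, ← mul_assoc]
  push_cast
  rw [← pow_add, Even.neg_one_pow ⟨_, rfl⟩, one_mul]

end geometry

/-! ### Faces, their cofaces and local structure -/

namespace Triangulation

/-- The `k`-element faces of `T`, encoded as tuples of vertices in increasing lexicographic
order. -/
def Tup {m : ℕ} (T : Triangulation (m + 1)) (k : ℕ) : Set (Fin k → Fin (m + 1) → ℝ) :=
  {u | StrictMono (fun i => toLex (u i)) ∧ Finset.univ.image u ∈ T.complex.faces}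

/-- The vertices completing the tuple `w` to a larger face. -/
def cof {m : ℕ} (T : Triangulation (m + 1)) {k : ℕ} (w : Fin k → Fin (m + 1) → ℝ) :
    Set (Fin (m + 1) → ℝ) :=
  {v | v ∉ Set.range w ∧ insert v (Finset.univ.image w) ∈ T.complex.faces}

variable {m : ℕ} {T : Triangulation (m + 1)} {k : ℕ}

lemma Tup.injective {u : Fin k → Fin (m + 1) → ℝ} (hu : u ∈ T.Tup k) : Function.Injective u :=
  fun _ _ h => hu.1.injective (congrArg toLex h)

lemma mem_simplex {σ : Finset (Fin (m + 1) → ℝ)} (hσ : σ ∈ T.complex.faces)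
    {x : Fin (m + 1) → ℝ} (hx : x ∈ convexHull ℝ (σ : Set (Fin (m + 1) → ℝ))) :
    x ∈ stdSimplex ℝ (Fin (m + 1)) := by
  rw [← T.space_eq]
  exact T.complex.convexHull_subset_space hσ hx

lemma vertex_mem {σ : Finset (Fin (m + 1) → ℝ)} (hσ : σ ∈ T.complex.faces)
    {x : Fin (m + 1) → ℝ} (hx : x ∈ σ) : x ∈ stdSimplex ℝ (Fin (m + 1)) :=
  mem_simplex hσ (subset_convexHull ℝ _ hx)

lemma mem_vertices_of_mem {σ : Finset (Fin (m + 1) → ℝ)} (hσ : σ ∈ T.complex.faces)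
    {x : Fin (m + 1) → ℝ} (hx : x ∈ σ) : x ∈ T.complex.vertices :=
  T.complex.down_closed hσ (Finset.singleton_subset_iff.2 hx) (Finset.singleton_nonempty _)

lemma linearIndependent {u : Fin k → Fin (m + 1) → ℝ} (hu : Function.Injective u)
    (hf : Finset.univ.image u ∈ T.complex.faces) : LinearIndependent ℝ u := by
  have ha : AffineIndependent ℝ u :=
    (T.complex.indep hf).comp_embedding
      ⟨fun i => (⟨u i, by simp⟩ : (Finset.univ.image u : Finset _)),
        fun a b h => hu (congrArg Subtype.val h)⟩
  rw [Fintype.linearIndependent_iff]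
  intro c hc i
  refine (affineIndependent_iff.1 ha) Finset.univ c ?_ hc i (Finset.mem_univ i)
  have h1 : ∑ l, (∑ i, c i • u i) l = 0 := by rw [hc]; simp
  have hs : ∀ i, ∑ l, u i l = 1 := fun i => (vertex_mem hf (x := u i) (by simp)).2
  simp only [Finset.sum_apply, Pi.smul_apply, smul_eq_mul] at h1
  rw [Finset.sum_comm] at h1
  simpa [← Finset.mul_sum, hs] using h1

lemma mem_hull_image_iff {u : Fin k → Fin (m + 1) → ℝ} {x : Fin (m + 1) → ℝ} :
    x ∈ convexHull ℝ ((Finset.univ.image u : Finset _) : Set (Fin (m + 1) → ℝ)) ↔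
      ∃ c : Fin k → ℝ, (∀ i, 0 ≤ c i) ∧ ∑ i, c i = 1 ∧ ∑ i, c i • u i = x := by
  have h : ((Finset.univ.image u : Finset _) : Set (Fin (m + 1) → ℝ)) =
      Fintype.linearCombination ℝ u '' Set.range fun i j : Fin k => if i = j then (1 : ℝ) else 0 := by
    ext y
    simp [Fintype.linearCombination_apply]
  rw [h, ← LinearMap.image_convexHull, convexHull_basis_eq_stdSimplex]
  simp only [Set.mem_image, Fintype.linearCombination_apply]
  exact ⟨fun ⟨c, hc, h⟩ => ⟨c, hc.1, hc.2, h⟩, fun ⟨c, h0, h1, h⟩ => ⟨c, ⟨h0, h1⟩, h⟩⟩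

/-- The barycenter of a tuple. -/
def bary (w : Fin k → Fin (m + 1) → ℝ) : Fin (m + 1) → ℝ := ∑ i, (k : ℝ)⁻¹ • w i

lemma bary_mem (hk : k ≠ 0) (w : Fin k → Fin (m + 1) → ℝ) :
    bary w ∈ convexHull ℝ ((Finset.univ.image w : Finset _) : Set (Fin (m + 1) → ℝ)) :=
  mem_hull_image_iff.2 ⟨fun _ => (k : ℝ)⁻¹, fun _ => by positivity, by simp [hk], rfl⟩

/-- A face containing the barycenter of another face contains that face. -/
lemma subset_of_bary_mem (hk : k ≠ 0) {w : Fin k → Fin (m + 1) → ℝ}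
    (hw : Function.Injective w) (hf : Finset.univ.image w ∈ T.complex.faces)
    {σ : Finset (Fin (m + 1) → ℝ)} (hσ : σ ∈ T.complex.faces)
    (hb : bary w ∈ convexHull ℝ (σ : Set (Fin (m + 1) → ℝ))) : Finset.univ.image w ⊆ σ := by
  intro x hx
  obtain ⟨i, -, rfl⟩ := Finset.mem_image.1 hx
  by_contra hi
  have h1 := T.complex.inter_subset_convexHull hf hσ ⟨bary_mem hk w, hb⟩
  have h2 : convexHull ℝ (((Finset.univ.image w : Finset _) : Set (Fin (m + 1) → ℝ)) ∩ σ) ⊆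
      Submodule.span ℝ (w '' {l | l ≠ i}) := by
    refine convexHull_min ?_ (Submodule.convex _)
    rintro y ⟨hy, hyσ⟩
    simp only [Finset.coe_image, Finset.coe_univ, Set.image_univ, Set.mem_range] at hy
    obtain ⟨l, rfl⟩ := hy
    refine Submodule.subset_span ⟨l, ?_, rfl⟩
    rintro rfl
    exact hi hyσ
  have h3 := h2 h1
  have h4 : w i ∉ Submodule.span ℝ (w '' {l | l ≠ i}) :=
    (linearIndependent hw hf).notMem_span_image (by simp)
  apply h4
  have hk' : (k : ℝ)⁻¹ ≠ 0 := by positivity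
  rw [← Submodule.smul_mem_iff _ hk']
  have h5 : (k : ℝ)⁻¹ • w i = bary w - ∑ l ∈ Finset.univ.erase i, (k : ℝ)⁻¹ • w l := by
    rw [bary, ← Finset.add_sum_erase _ _ (Finset.mem_univ i)]
    abel
  rw [h5]
  refine Submodule.sub_mem _ h3 (Submodule.sum_mem _ fun l hl => Submodule.smul_mem _ _ ?_)
  exact Submodule.subset_span ⟨l, Finset.ne_of_mem_erase hl, rfl⟩

lemma image_cons (v : Fin (m + 1) → ℝ) (w : Fin k → Fin (m + 1) → ℝ) :
    Finset.univ.image (Fin.cons v w : Fin (k + 1) → Fin (m + 1) → ℝ) =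
      insert v (Finset.univ.image w) := by
  ext x
  simp [Fin.exists_fin_succ, eq_comm]

lemma cof_linearIndependent {w : Fin k → Fin (m + 1) → ℝ} (hw : w ∈ T.Tup k)
    {v : Fin (m + 1) → ℝ} (hv : v ∈ T.cof w) :
    LinearIndependent ℝ (Fin.cons v w : Fin (k + 1) → Fin (m + 1) → ℝ) :=
  linearIndependent (T := T) (Fin.cons_injective_iff.2 ⟨hv.1, Tup.injective hw⟩)
    (by rw [image_cons]; exact hv.2)

lemma det_ne_zero {u : Fin (m + 1) → Fin (m + 1) → ℝ} (h : LinearIndependent ℝ u) :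
    (Matrix.of u).det ≠ 0 := by
  have := (Matrix.linearIndependent_rows_iff_isUnit (A := Matrix.of u)).1 h
  rw [Matrix.isUnit_iff_isUnit_det] at this
  exact this.ne_zero

lemma ell_ne_zero {w : Fin m → Fin (m + 1) → ℝ} (hw : w ∈ T.Tup m)
    {v : Fin (m + 1) → ℝ} (hv : v ∈ T.cof w) : ell w v ≠ 0 := by
  rw [ell_apply]
  exact det_ne_zero (cof_linearIndependent hw hv)

/-- Two cofaces of a codimension-one face on the same side of its hyperplane coincide, because
their interiors would overlap near the barycenter of that face. -/
lemma cof_unique (hm : m ≠ 0) {w : Fin m → Fin (m + 1) → ℝ} (hw : w ∈ T.Tup m)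
    {v v' : Fin (m + 1) → ℝ} (hv : v ∈ T.cof w) (hv' : v' ∈ T.cof w)
    (h : 0 < ell w v * ell w v') : v = v' := by
  have hli := cof_linearIndependent hw hv
  have hspan := hli.span_eq_top_of_card_eq_finrank (by simp)
  have hmem : v' ∈ Submodule.span ℝ
      (Set.range (Fin.cons v w : Fin (m + 1) → Fin (m + 1) → ℝ)) := by
    rw [hspan]; trivial
  obtain ⟨c, hc⟩ := (Submodule.mem_span_range_iff_exists_fun ℝ).1 hmem
  rw [Fin.sum_univ_succ] at hc
  simp only [Fin.cons_zero, Fin.cons_succ] at hc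
  have hell : ell w v' = c 0 * ell w v := by
    rw [← hc]
    simp [ell_vertex]
  have hc0 : 0 < c 0 := by
    rw [hell] at h
    have : 0 < ell w v * ell w v := by
      rcases lt_or_gt_of_ne (ell_ne_zero hw hv) with h' | h' <;> nlinarith
    by_contra h''
    nlinarith
  have hsum1 : ∑ l, v l = 1 := (vertex_mem hv.2 (x := v) (by simp)).2
  have hsum2 : ∑ l, v' l = 1 := (vertex_mem hv'.2 (x := v') (by simp)).2
  have hsumw : ∀ i, ∑ l, w i l = 1 := fun i => (vertex_mem hw.2 (x := w i) (by simp)).2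
  have hcs : c 0 + ∑ i, c (Fin.succ i) = 1 := by
    have h1 : ∑ l, (c 0 • v + ∑ i : Fin m, c i.succ • w i) l = 1 := by rw [hc, hsum2]
    simp only [Pi.add_apply, Finset.sum_apply, Pi.smul_apply, smul_eq_mul,
      Finset.sum_add_distrib] at h1
    rw [Finset.sum_comm] at h1
    simpa [← Finset.mul_sum, hsumw, hsum1] using h1
  by_contra hne
  set B : ℝ := ∑ i : Fin m, |c i.succ| with hB
  have hB0 : 0 ≤ B := Finset.sum_nonneg fun _ _ => abs_nonneg _
  have hm0 : (0 : ℝ) < m := by positivity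
  -- small enough for the point `(1 - ε) p + ε v'` (`p` the barycenter of `w`) to lie in the
  -- simplex spanned by `v` and `w`
  set ε : ℝ := 1 / (1 + m * B) with hε
  have hε0 : 0 < ε := by positivity
  have hε1 : ε * (1 + m * B) = 1 := by rw [hε]; field_simp
  set q : Fin (m + 1) → ℝ := (1 - ε) • bary w + ε • v' with hq
  have hεle : ε ≤ 1 := by nlinarith [mul_nonneg hm0.le hB0, mul_nonneg hε0.le (mul_nonneg hm0.le hB0)]
  have hq1 : q ∈ convexHull ℝ ((insert v' (Finset.univ.image w) : Finset _) :
      Set (Fin (m + 1) → ℝ)) := by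
    refine (convex_convexHull ℝ _) ?_ ?_ (sub_nonneg.2 hεle) hε0.le (by ring)
    · exact convexHull_mono (by simp) (bary_mem hm w)
    · exact subset_convexHull ℝ _ (by simp)
  have hq2 : q ∈ convexHull ℝ ((insert v (Finset.univ.image w) : Finset _) :
      Set (Fin (m + 1) → ℝ)) := by
    rw [← image_cons, mem_hull_image_iff]
    refine ⟨Fin.cons (ε * c 0) fun i => (1 - ε) * (m : ℝ)⁻¹ + ε * c i.succ, ?_, ?_, ?_⟩
    · refine Fin.cases (by simp; positivity) fun i => ?_
      simp only [Fin.cons_succ]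
      have h1 : |c i.succ| ≤ B :=
        Finset.single_le_sum (f := fun i : Fin m => |c i.succ|) (fun _ _ => abs_nonneg _)
          (Finset.mem_univ i)
      have h2 : (1 - ε) * (m : ℝ)⁻¹ = ε * B := by
        field_simp
        linarith
      rw [h2, ← mul_add]
      exact mul_nonneg hε0.le (by linarith [neg_abs_le (c i.succ)])
    · rw [Fin.sum_univ_succ]
      simp only [Fin.cons_zero, Fin.cons_succ, Finset.sum_add_distrib, ← Finset.mul_sum]
      have : ∑ _i : Fin m, (m : ℝ)⁻¹ = 1 := by simp [hm]
      rw [this]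
      linear_combination ε * hcs
    · rw [Fin.sum_univ_succ]
      simp only [Fin.cons_zero, Fin.cons_succ, add_smul, Finset.sum_add_distrib, mul_smul,
        ← Finset.smul_sum]
      rw [hq, ← hc, bary, ← Finset.smul_sum]
      module
  have h3 := T.complex.inter_subset_convexHull hv.2 hv'.2 ⟨hq2, hq1⟩
  have h4 : convexHull ℝ (((insert v (Finset.univ.image w) : Finset _) :
      Set (Fin (m + 1) → ℝ)) ∩ ((insert v' (Finset.univ.image w) : Finset _) : Set _)) ⊆
      Submodule.span ℝ (Set.range w) := by
    refine convexHull_min ?_ (Submodule.convex _)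
    rintro y ⟨hy, hy'⟩
    simp only [Finset.coe_insert, Finset.coe_image, Finset.coe_univ, Set.image_univ,
      Set.mem_insert_iff] at hy hy'
    refine Submodule.subset_span ?_
    rcases hy with rfl | hy
    · exact hy'.resolve_left hne
    · exact hy
  have h5 := ell_span w (h4 h3)
  have h6 : ell w (bary w) = 0 := by simp [bary, ell_vertex]
  rw [hq, map_add, map_smul, map_smul, h6, smul_zero, zero_add, smul_eq_mul] at h5
  rcases mul_eq_zero.1 h5 with h7 | h7
  · exact hε0.ne' h7
  · rw [h7, mul_zero] at h; exact lt_irrefl _ h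

lemma card_image {w : Fin k → Fin (m + 1) → ℝ} (hw : w ∈ T.Tup k) :
    (Finset.univ.image w).card = k := by
  rw [Finset.card_image_of_injective _ (Tup.injective hw), Finset.card_univ, Fintype.card_fin]

/-- A top-dimensional face containing a codimension-one face is one of its cofaces. -/
lemma exists_cof_of_subset {w : Fin m → Fin (m + 1) → ℝ} (hw : w ∈ T.Tup m)
    {τ : Finset (Fin (m + 1) → ℝ)} (hτ : τ ∈ T.complex.faces) (hc : τ.card = m + 1)
    (hsub : Finset.univ.image w ⊆ τ) :
    ∃ v ∈ T.cof w, τ = insert v (Finset.univ.image w) := by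
  obtain ⟨v, hv⟩ : ∃ v, τ \ Finset.univ.image w = {v} := by
    rw [← Finset.card_eq_one, Finset.card_sdiff_of_subset hsub, card_image hw, hc]
    omega
  have hvm : v ∈ τ \ Finset.univ.image w := by rw [hv]; simp
  have he : τ = insert v (Finset.univ.image w) := by
    rw [← Finset.sdiff_union_of_subset hsub, hv]; rfl
  refine ⟨v, ⟨fun h => (Finset.mem_sdiff.1 hvm).2 (by simpa using h), he ▸ hτ⟩, he⟩

lemma exists_cof {w : Fin m → Fin (m + 1) → ℝ} (hw : w ∈ T.Tup m) : ∃ v, v ∈ T.cof w := by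
  obtain ⟨τ, hτ, hsub, hc⟩ := T.pure _ hw.2
  obtain ⟨v, hv, -⟩ := exists_cof_of_subset hw hτ hc hsub
  exact ⟨v, hv⟩

/-- An interior codimension-one face has a coface on either side of its hyperplane; the sign `s`
selects the side. -/
lemma exists_cof_side (hm : m ≠ 0) {w : Fin m → Fin (m + 1) → ℝ} (hw : w ∈ T.Tup m)
    (hinter : ∀ j, ∃ i, w i j ≠ 0) {s : ℝ} (hs : s ≠ 0) : ∃ v ∈ T.cof w, 0 < s * ell w v := by
  have hps := mem_simplex hw.2 (bary_mem hm w)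
  have hws : ∀ i, w i ∈ stdSimplex ℝ (Fin (m + 1)) := fun i => vertex_mem hw.2 (by simp)
  have hp : ∀ j, 0 < bary w j := by
    intro j
    obtain ⟨i, hi⟩ := hinter j
    simp only [bary, Finset.sum_apply, Pi.smul_apply, smul_eq_mul]
    refine Finset.sum_pos' (fun i _ => mul_nonneg (by positivity) ((hws i).1 j))
      ⟨i, Finset.mem_univ _, mul_pos (by positivity) (lt_of_le_of_ne ((hws i).1 j) hi.symm)⟩
  have hexp : ∀ x, ell w x = ∑ j, x j * ell w (Pi.single j 1) := by
    intro x
    conv_lhs => rw [← Finset.univ_sum_single x, map_sum]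
    refine Finset.sum_congr rfl fun j _ => ?_
    rw [← smul_eq_mul, ← map_smul]
    congr 1
    ext l; simp [Pi.single_apply]
  have h6 : ell w (bary w) = 0 := by simp [bary, ell_vertex]
  obtain ⟨j, hj⟩ : ∃ j, 0 < s * ell w (Pi.single j 1) := by
    by_contra! hcon
    have hz : ∑ j, bary w j * -(s * ell w (Pi.single j 1)) = 0 := by
      have : ∑ j, bary w j * -(s * ell w (Pi.single j 1)) = -s * ell w (bary w) := by
        rw [hexp, Finset.mul_sum]
        exact Finset.sum_congr rfl fun j _ => by ring
      rw [this, h6, mul_zero]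
    rw [Finset.sum_eq_zero_iff_of_nonneg
      (fun j _ => mul_nonneg (hp j).le (neg_nonneg.2 (hcon j)))] at hz
    obtain ⟨v, hv⟩ := exists_cof hw
    apply ell_ne_zero hw hv
    rw [hexp]
    refine Finset.sum_eq_zero fun j hj => ?_
    have := hz j hj
    simp only [mul_eq_zero, neg_eq_zero, hs, (hp j).ne', false_or] at this
    rw [this, mul_zero]
  -- points of the simplex tending to the barycenter of `w` from the side prescribed by `s`
  let q : ℕ → Fin (m + 1) → ℝ := fun t =>
    (1 - 1 / ((t : ℝ) + 1)) • bary w + (1 / ((t : ℝ) + 1)) • (Pi.single j 1 : Fin (m + 1) → ℝ)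
  have hqt : Filter.Tendsto q Filter.atTop (nhds (bary w)) := by
    have h1 := tendsto_one_div_add_atTop_nhds_zero_nat (𝕜 := ℝ)
    have h2 := ((h1.const_sub 1).smul_const (bary w)).add
      (h1.smul_const (Pi.single j 1 : Fin (m + 1) → ℝ))
    simpa [q] using h2
  have hqs : ∀ t, q t ∈ stdSimplex ℝ (Fin (m + 1)) := by
    intro t
    refine (convex_stdSimplex ℝ _) hps (single_mem_stdSimplex ℝ j) ?_ (by positivity) (by ring)
    rw [sub_nonneg, div_le_one (by positivity)]
    have : (0 : ℝ) ≤ t := by positivity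
    linarith
  have hev : ∀ᶠ t in Filter.atTop, ∀ τ ∈ T.complex.faces, ¬ Finset.univ.image w ⊆ τ →
      q t ∉ convexHull ℝ (τ : Set (Fin (m + 1) → ℝ)) := by
    rw [Filter.eventually_all_finite T.finite]
    intro τ hτ
    by_cases hsub : Finset.univ.image w ⊆ τ
    · exact Filter.Eventually.of_forall fun _ h => absurd hsub h
    · have hcl : IsClosed (convexHull ℝ (τ : Set (Fin (m + 1) → ℝ))) :=
        (τ.finite_toSet.isCompact_convexHull ℝ).isClosed
      have hnot : bary w ∈ (convexHull ℝ (τ : Set (Fin (m + 1) → ℝ)))ᶜ := fun h =>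
        hsub (subset_of_bary_mem hm (Tup.injective hw) hw.2 hτ h)
      exact (hqt.eventually (hcl.isOpen_compl.mem_nhds hnot)).mono fun _ h _ => h
  obtain ⟨t, ht⟩ := hev.exists
  have hqsp := hqs t
  rw [← T.space_eq, Geometry.SimplicialComplex.mem_space_iff] at hqsp
  obtain ⟨τ₀, hτ₀, hqτ₀⟩ := hqsp
  obtain ⟨τ, hτ, hττ, hc⟩ := T.pure _ hτ₀
  have hqτ := convexHull_mono (𝕜 := ℝ) (Finset.coe_subset.2 hττ) hqτ₀
  have hsub : Finset.univ.image w ⊆ τ := by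
    by_contra h
    exact ht τ hτ h hqτ
  obtain ⟨v, hv, rfl⟩ := exists_cof_of_subset hw hτ hc hsub
  refine ⟨v, hv, ?_⟩
  rw [← image_cons, mem_hull_image_iff] at hqτ
  obtain ⟨c, hc0, -, hcq⟩ := hqτ
  rw [Fin.sum_univ_succ] at hcq
  simp only [Fin.cons_zero, Fin.cons_succ] at hcq
  have h1 : ell w (q t) = c 0 * ell w v := by
    rw [← hcq]; simp [ell_vertex]
  have h2 : ell w (q t) = (1 / ((t : ℝ) + 1)) * ell w (Pi.single j 1) := by
    simp only [q, map_add, map_smul, h6, smul_eq_mul, mul_zero, zero_add]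
  have h3 : 0 < c 0 * (s * ell w v) := by
    have : c 0 * (s * ell w v) = (1 / ((t : ℝ) + 1)) * (s * ell w (Pi.single j 1)) := by
      linear_combination s * h2 - s * h1
    rw [this]
    positivity
  by_contra h
  nlinarith [hc0 0, mul_nonneg (hc0 0) (neg_nonneg.2 (not_lt.1 h))]

end Triangulation

/-! ### The degree and the Stokes formula -/

/-- The sign of a real number, as an integer. -/
def sg (x : ℝ) : ℤ := (SignType.sign x : ℤ)

lemma sg_zero : sg 0 = 0 := by simp [sg]
lemma sg_pos {x : ℝ} (h : 0 < x) : sg x = 1 := by simp [sg, sign_pos h]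
lemma sg_neg {x : ℝ} (h : x < 0) : sg x = -1 := by simp [sg, sign_neg h]

lemma sg_neg_one_pow_mul (k : ℕ) (x : ℝ) : sg ((-1) ^ k * x) = (-1) ^ k * sg x := by
  rcases Nat.even_or_odd k with h | h
  · simp [h.neg_one_pow]
  · simp [h.neg_one_pow, sg, Left.sign_neg]

lemma sg_mul_self (x : ℝ) : (sg x : ℝ) * x = |x| := by
  rcases lt_trichotomy x 0 with h | rfl | h
  · simp [sg_neg h, abs_of_neg h]
  · simp
  · simp [sg_pos h, abs_of_pos h]

namespace Triangulation

variable {m : ℕ} {T : Triangulation (m + 1)} {k : ℕ}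

lemma tup_ext {u u' : Fin k → Fin (m + 1) → ℝ} (hu : u ∈ T.Tup k) (hu' : u' ∈ T.Tup k)
    (h : Finset.univ.image u = Finset.univ.image u') : u = u' := by
  have h1 : Set.range u = Set.range u' := by
    have := congrArg (fun s : Finset _ => (s : Set (Fin (m + 1) → ℝ))) h
    simpa using this
  have h2 : Set.range (fun i => toLex (u i)) = Set.range (fun i => toLex (u' i)) := by
    have := congrArg (toLex '' ·) h1
    simpa [← Set.range_comp, Function.comp_def] using this
  have h3 := (hu.1.range_inj hu'.1).1 h2
  funext i
  exact toLex.injective (congrFun h3 i)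

lemma exists_tup {σ : Finset (Fin (m + 1) → ℝ)} (hσ : σ ∈ T.complex.faces) (hc : σ.card = k) :
    ∃ u ∈ T.Tup k, Finset.univ.image u = σ := by
  let s : Finset (Lex (Fin (m + 1) → ℝ)) := σ.map toLex.toEmbedding
  have hs : s.card = k := by rw [Finset.card_map, hc]
  let u : Fin k → Fin (m + 1) → ℝ := fun i => ofLex (s.orderEmbOfFin hs i)
  have him : Finset.univ.image u = σ := by
    ext x
    have h := Set.ext_iff.1 (Finset.range_orderEmbOfFin s hs) (toLex x)
    simp only [Set.mem_range, Finset.mem_coe, s, Finset.mem_map_equiv] at h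
    simp only [Finset.mem_image, Finset.mem_univ, true_and]
    exact h
  exact ⟨u, ⟨fun a b hab => (s.orderEmbOfFin hs).strictMono hab, him.symm ▸ hσ⟩, him⟩

lemma tup_finite (T : Triangulation (m + 1)) (k : ℕ) : (T.Tup k).Finite :=
  Set.Finite.of_injOn (f := fun u => Finset.univ.image u) (fun _ hu => hu.2)
    (fun _ hu _ hu' h => tup_ext hu hu' h) T.finite

lemma cof_finite (T : Triangulation (m + 1)) (w : Fin k → Fin (m + 1) → ℝ) :
    (T.cof w).Finite := by
  refine Set.Finite.of_injOn (f := fun v => insert v (Finset.univ.image w)) (fun _ hv => hv.2)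
    (fun v hv v' _ h => ?_) T.finite
  have h1 : v ∈ insert v' (Finset.univ.image w) := by
    rw [← show insert v (Finset.univ.image w) = insert v' (Finset.univ.image w) from h]; simp
  rcases Finset.mem_insert.1 h1 with h2 | h2
  · exact h2
  · exact absurd (by simpa using h2) hv.1

/-- The finset of the `k`-element faces of `T`, in the encoding of `Tup`. -/
def tupF (T : Triangulation (m + 1)) (k : ℕ) : Finset (Fin k → Fin (m + 1) → ℝ) :=
  (T.tup_finite k).toFinset

lemma mem_tupF {u : Fin k → Fin (m + 1) → ℝ} : u ∈ T.tupF k ↔ u ∈ T.Tup k := by simp [tupF]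

/-- The finset of the vertices completing `w` to a larger face. -/
def cofF (T : Triangulation (m + 1)) (w : Fin k → Fin (m + 1) → ℝ) :
    Finset (Fin (m + 1) → ℝ) := (T.cof_finite w).toFinset

lemma mem_cofF {w : Fin k → Fin (m + 1) → ℝ} {v : Fin (m + 1) → ℝ} :
    v ∈ T.cofF w ↔ v ∈ T.cof w := by simp [cofF]

lemma image_succAbove {u : Fin (k + 1) → Fin (m + 1) → ℝ} (hu : Function.Injective u)
    (i : Fin (k + 1)) : Finset.univ.image (fun s => u (i.succAbove s)) =
      (Finset.univ.image u).erase (u i) := by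
  ext x
  simp only [Finset.mem_image, Finset.mem_univ, true_and, Finset.mem_erase]
  constructor
  · rintro ⟨s, rfl⟩
    exact ⟨fun h => Fin.succAbove_ne i s (hu h), _, rfl⟩
  · rintro ⟨hne, l, rfl⟩
    obtain ⟨s, hs⟩ := Fin.exists_succAbove_eq (x := l) (y := i) (fun h => hne (by rw [h]))
    exact ⟨s, by rw [hs]⟩

lemma tup_succAbove (hk : k ≠ 0) {u : Fin (k + 1) → Fin (m + 1) → ℝ} (hu : u ∈ T.Tup (k + 1))
    (i : Fin (k + 1)) : (fun s => u (i.succAbove s)) ∈ T.Tup k := by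
  refine ⟨fun a b hab => hu.1 (Fin.strictMono_succAbove i hab), T.complex.down_closed hu.2 ?_ ?_⟩
  · rw [image_succAbove (Tup.injective hu)]
    exact Finset.erase_subset _ _
  · exact ⟨u (i.succAbove ⟨0, Nat.pos_of_ne_zero hk⟩), Finset.mem_image.2 ⟨_, Finset.mem_univ _, rfl⟩⟩

lemma cof_succAbove {u : Fin (k + 1) → Fin (m + 1) → ℝ} (hu : u ∈ T.Tup (k + 1))
    (i : Fin (k + 1)) : u i ∈ T.cof (fun s => u (i.succAbove s)) := by
  refine ⟨?_, ?_⟩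
  · rintro ⟨s, hs⟩
    exact Fin.succAbove_ne i s (Tup.injective hu hs)
  · rw [image_succAbove (Tup.injective hu), Finset.insert_erase (by simp)]
    exact hu.2

/-- Summation by parts: the oriented boundaries of the top-dimensional faces, grouped by
codimension-one face. -/
lemma sum_boundary {A : Type*} [CommRing A] (hm : m ≠ 0)
    (ψ : (Fin m → Fin (m + 1) → ℝ) → A) :
    ∑ u ∈ T.tupF (m + 1), (sg (Matrix.of u).det : A) *
        ∑ k : Fin (m + 1), (-1) ^ (k : ℕ) * ψ (fun s => u (k.succAbove s)) =
      ∑ w ∈ T.tupF m, ((∑ v ∈ T.cofF w, sg (ell w v) : ℤ) : A) * ψ w := by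
  have h1 : ∀ u : Fin (m + 1) → Fin (m + 1) → ℝ, (sg (Matrix.of u).det : A) *
      ∑ k : Fin (m + 1), (-1) ^ (k : ℕ) * ψ (fun s => u (k.succAbove s)) =
      ∑ k : Fin (m + 1), (sg (ell (fun s => u (k.succAbove s)) (u k)) : A) *
        ψ (fun s => u (k.succAbove s)) := by
    intro u
    rw [Finset.mul_sum]
    refine Finset.sum_congr rfl fun k _ => ?_
    rw [det_eq_ell u k, sg_neg_one_pow_mul]
    push_cast
    have h : ((-1 : A) ^ (k : ℕ)) * (-1) ^ (k : ℕ) = 1 := by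
      rw [← pow_add, Even.neg_one_pow ⟨_, rfl⟩]
    linear_combination (sg (ell (fun s => u (k.succAbove s)) (u k)) : A) *
        ψ (fun s => u (k.succAbove s)) * h
  simp only [h1, Int.cast_sum, Finset.sum_mul]
  rw [← Finset.sum_product', Finset.sum_sigma']
  refine Finset.sum_bij
    (fun p _ => ⟨fun s => p.1 (p.2.succAbove s), p.1 p.2⟩) ?_ ?_ ?_ ?_
  · rintro ⟨u, k⟩ h
    have hu : u ∈ T.Tup (m + 1) := mem_tupF.1 (Finset.mem_product.1 h).1
    exact Finset.mem_sigma.2 ⟨mem_tupF.2 (tup_succAbove hm hu k), mem_cofF.2 (cof_succAbove hu k)⟩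
  · rintro ⟨u, k⟩ h ⟨u', k'⟩ h' heq
    have hu : u ∈ T.Tup (m + 1) := mem_tupF.1 (Finset.mem_product.1 h).1
    have hu' : u' ∈ T.Tup (m + 1) := mem_tupF.1 (Finset.mem_product.1 h').1
    simp only [Sigma.mk.injEq, heq_eq_eq] at heq
    have himg : Finset.univ.image u = Finset.univ.image u' := by
      rw [← Finset.insert_erase (s := Finset.univ.image u) (a := u k) (by simp),
        ← Finset.insert_erase (s := Finset.univ.image u') (a := u' k') (by simp),
        ← image_succAbove (Tup.injective hu), ← image_succAbove (Tup.injective hu'), heq.1, heq.2]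
    obtain rfl := tup_ext hu hu' himg
    rw [Tup.injective hu heq.2]
  · rintro ⟨w, v⟩ h
    have hw : w ∈ T.Tup m := mem_tupF.1 (Finset.mem_sigma.1 h).1
    have hv : v ∈ T.cof w := mem_cofF.1 (Finset.mem_sigma.1 h).2
    have hvn : v ∉ Finset.univ.image w := fun h' => hv.1 (by simpa using h')
    obtain ⟨u, hu, hi⟩ := exists_tup hv.2 (k := m + 1)
      (by rw [Finset.card_insert_of_notMem hvn, card_image hw])
    have : v ∈ Finset.univ.image u := by rw [hi]; simp
    obtain ⟨k, -, hk⟩ := Finset.mem_image.1 this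
    refine ⟨(u, k), Finset.mem_product.2 ⟨mem_tupF.2 hu, Finset.mem_univ _⟩, ?_⟩
    have : (fun s => u (k.succAbove s)) = w := by
      refine tup_ext (tup_succAbove hm hu k) hw ?_
      rw [image_succAbove (Tup.injective hu), hi, hk, Finset.erase_insert hvn]
    simp only [this, hk]
  · rintro ⟨u, k⟩ _
    rfl

/-- The oriented number of cofaces of a codimension-one face: the two cofaces of an interior face
cancel, and a face in the facet `x j = 0` inherits the orientation of that facet. -/
lemma sum_sg_cof (hm : m ≠ 0) {w : Fin m → Fin (m + 1) → ℝ} (hw : w ∈ T.Tup m) :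
    ∑ v ∈ T.cofF w, sg (ell w v) =
      ∑ j, if ∀ i, w i j = 0 then sg (ell w (Pi.single j 1)) else 0 := by
  by_cases hinter : ∀ j, ∃ i, w i j ≠ 0
  · obtain ⟨a, ha, ha'⟩ := exists_cof_side hm hw hinter (s := 1) one_ne_zero
    obtain ⟨b, hb, hb'⟩ := exists_cof_side hm hw hinter (s := -1) (by norm_num)
    have hab : a ≠ b := by rintro rfl; linarith
    have hset : T.cofF w = {a, b} := by
      ext v
      rw [mem_cofF]
      simp only [Finset.mem_insert, Finset.mem_singleton]
      constructor
      · intro hv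
        rcases lt_or_gt_of_ne (ell_ne_zero hw hv) with h | h
        · exact Or.inr (cof_unique hm hw hv hb (by nlinarith))
        · exact Or.inl (cof_unique hm hw hv ha (by nlinarith))
      · rintro (rfl | rfl) <;> assumption
    rw [hset, Finset.sum_pair hab, sg_pos (by linarith), sg_neg (by linarith)]
    refine (Finset.sum_eq_zero fun j _ => if_neg ?_).symm
    push Not
    exact hinter j
  · push Not at hinter
    obtain ⟨j, hj⟩ := hinter
    obtain ⟨a, ha⟩ := exists_cof hw
    have hpos : ∀ v ∈ T.cof w, 0 < v j ∧ ell w v = v j * ell w (Pi.single j 1) := by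
      intro v hv
      have h1 := ell_facet hj v
      refine ⟨lt_of_le_of_ne ((vertex_mem hv.2 (x := v) (by simp)).1 j) fun h => ?_, h1⟩
      rw [← h, zero_mul] at h1
      exact ell_ne_zero hw hv h1
    have hej : ell w (Pi.single j 1) ≠ 0 := fun h =>
      ell_ne_zero hw ha (by rw [(hpos a ha).2, h, mul_zero])
    have hset : T.cofF w = {a} := by
      ext v
      rw [mem_cofF, Finset.mem_singleton]
      refine ⟨fun hv => cof_unique hm hw hv ha ?_, fun h => h ▸ ha⟩
      rw [(hpos a ha).2, (hpos v hv).2]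
      have := mul_pos (mul_pos (hpos v hv).1 (hpos a ha).1) (mul_self_pos.2 hej)
      nlinarith
    rw [hset, Finset.sum_singleton, Finset.sum_eq_single j, if_pos hj, (hpos a ha).2]
    · rcases lt_or_gt_of_ne hej with h | h
      · rw [sg_neg h, sg_neg (mul_neg_of_pos_of_neg (hpos a ha).1 h)]
      · rw [sg_pos h, sg_pos (mul_pos (hpos a ha).1 h)]
    · intro l _ hl
      -- `w` cannot span two facets: `ell w` vanishes on `e_l` for `l ≠ j`
      rw [ell_facet hj, Pi.single_eq_of_ne hl.symm, zero_mul, sg_zero, ite_self]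
    · simp

/-- The degree of the piecewise linear map given by `F` on vertices: the sum of the determinants
of the images of the top-dimensional faces, each taken with the orientation of the face. -/
def total {A : Type*} [CommRing A] (T : Triangulation (m + 1))
    (F : (Fin (m + 1) → ℝ) → Fin (m + 1) → A) : A :=
  ∑ u ∈ T.tupF (m + 1), (sg (Matrix.of u).det : A) * (Matrix.of fun t => F (u t)).det

/-- Stokes formula: two degrees differ by the contribution of the prisms over the facets. -/
lemma total_sub {A : Type*} [CommRing A] [IsDomain A] (hm : m ≠ 0)
    (F G : (Fin (m + 1) → ℝ) → Fin (m + 1) → A)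
    (hF : ∀ v ∈ T.complex.vertices, ∑ i, F v i = 1)
    (hG : ∀ v ∈ T.complex.vertices, ∑ i, G v i = 1) :
    T.total G - T.total F = ∑ j, ∑ w ∈ (T.tupF m).filter (fun w => ∀ i, w i j = 0),
      (sg (ell w (Pi.single j 1)) : A) * prism F G w := by
  rw [total, total, ← Finset.sum_sub_distrib]
  have h1 : ∀ u ∈ T.tupF (m + 1), (sg (Matrix.of u).det : A) * (Matrix.of fun t => G (u t)).det -
      (sg (Matrix.of u).det : A) * (Matrix.of fun t => F (u t)).det =
      (sg (Matrix.of u).det : A) * ∑ k : Fin (m + 1), (-1) ^ (k : ℕ) *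
        prism F G (fun s => u (k.succAbove s)) := by
    intro u hu
    have hv : ∀ t, u t ∈ T.complex.vertices := fun t =>
      mem_vertices_of_mem (mem_tupF.1 hu).2 (by simp)
    rw [← mul_sub, prism_identity F G u (fun t => hF _ (hv t)) (fun t => hG _ (hv t))]
  rw [Finset.sum_congr rfl h1, sum_boundary hm]
  have h2 : ∀ w ∈ T.tupF m, ((∑ v ∈ T.cofF w, sg (ell w v) : ℤ) : A) * prism F G w =
      ∑ j, if ∀ i, w i j = 0 then (sg (ell w (Pi.single j 1)) : A) * prism F G w else 0 := by
    intro w hw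
    rw [sum_sg_cof hm (mem_tupF.1 hw), Int.cast_sum, Finset.sum_mul]
    refine Finset.sum_congr rfl fun j _ => ?_
    split_ifs <;> simp
  rw [Finset.sum_congr rfl h2, Finset.sum_comm]
  simp only [Finset.sum_filter]

end Triangulation

/-! ### Symmetry of the facets -/

/-- The sign is that of the cycle `ρ^j`; the same sign occurs in `prism_rmap`, so that the
contributions of the two faces to the Stokes formula agree. -/
lemma ell_rmap {m : ℕ} (j : Fin (m + 1)) (w : Fin m → Fin (m + 1) → ℝ) :
    ell (fun i => rmap j (w i)) (Pi.single j 1) = (-1) ^ (j : ℕ) * ell w (Pi.single 0 1) := by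
  have h1 : (Pi.single j 1 : Fin (m + 1) → ℝ) = rmap j (Pi.single 0 1) := by
    funext i
    rw [rmap_apply]
    by_cases h : i = j
    · subst h; simp
    · rw [Pi.single_eq_of_ne h, Pi.single_eq_of_ne]
      intro h0
      exact h ((Fin.cycleRange j).injective (by rw [h0, Fin.cycleRange_self]))
  have h2 : Matrix.of (Fin.cons (rmap j (Pi.single 0 1)) fun i => rmap j (w i)) =
      (Matrix.of (Fin.cons (Pi.single 0 1) w : Fin (m + 1) → Fin (m + 1) → ℝ)).submatrix id
        (Fin.cycleRange j) := by
    ext a b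
    refine Fin.cases ?_ (fun a => ?_) a <;> rfl
  rw [ell_apply, ell_apply, h1, h2, Matrix.det_permute', Fin.sign_cycleRange]
  push_cast
  rfl

lemma prism_rmap {m : ℕ} {A : Type*} [CommRing A] (j : Fin (m + 1))
    (F G : (Fin (m + 1) → ℝ) → Fin (m + 1) → A) (w : Fin m → Fin (m + 1) → ℝ)
    (hF : ∀ i l, F (rmap j (w i)) l = F (w i) (Fin.cycleRange j l))
    (hG : ∀ i l, G (rmap j (w i)) l = G (w i) (Fin.cycleRange j l)) :
    prism F G (fun i => rmap j (w i)) = (-1) ^ (j : ℕ) * prism F G w := by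
  rw [prism, prism, Finset.mul_sum]
  refine Finset.sum_congr rfl fun i _ => ?_
  have h : Matrix.of (prismRow F G i fun i => rmap j (w i)) =
      (Matrix.of (prismRow F G i w)).submatrix id (Fin.cycleRange j) := by
    ext t l
    simp only [Matrix.of_apply, Matrix.submatrix_apply, id, prismRow]
    split_ifs
    · exact hF _ _
    · exact hG _ _
  rw [h, Matrix.det_permute', Fin.sign_cycleRange]
  push_cast
  ring

namespace Triangulation

variable {m : ℕ} {T : Triangulation (m + 1)}

lemma tup_rmap (hT : T.IsNice) (j : Fin (m + 1)) {w : Fin m → Fin (m + 1) → ℝ}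
    (hw : w ∈ T.Tup m) (h0 : ∀ i, w i 0 = 0) : (fun i => rmap j (w i)) ∈ T.Tup m := by
  refine ⟨fun a b hab => (rmap_lex_iff (h0 a) (h0 b)).2 (hw.1 hab), ?_⟩
  have h := hT j _ hw.2 (by simpa using h0)
  rwa [Finset.image_image] at h

/-- Every codimension-one face of `T` in the facet `x j = 0` is the image of a face in the facet
`x 0 = 0`: the barycenter of its preimage lies in some face of `T` in the latter facet, whose
image is then a face of `T` meeting, hence containing, the given one. -/
lemma tup_of_rmap (hm : m ≠ 0) (hT : T.IsNice) (j : Fin (m + 1)) {w : Fin m → Fin (m + 1) → ℝ}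
    (hw : (fun i => rmap j (w i)) ∈ T.Tup m) (h0 : ∀ i, w i 0 = 0) : w ∈ T.Tup m := by
  have hb : rmap j (bary w) = bary fun i => rmap j (w i) := by
    simp [rmap_eq_funLeft, bary]
  have hpb : bary w ∈ T.complex.space := by
    rw [T.space_eq]
    have h := mem_simplex hw.2 (bary_mem hm _)
    rw [← hb] at h
    refine ⟨fun i => ?_, ?_⟩
    · have := h.1 ((Fin.cycleRange j).symm i)
      rwa [rmap_apply, Equiv.apply_symm_apply] at this
    · rw [← h.2]
      exact (Equiv.sum_comp (Fin.cycleRange j) (bary w)).symm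
  rw [Geometry.SimplicialComplex.mem_space_iff] at hpb
  obtain ⟨τ, hτ, hbτ⟩ := hpb
  have hb0 : bary w 0 = 0 := by simp [bary, h0]
  rw [Finset.convexHull_eq] at hbτ
  obtain ⟨c, hc0, hc1, hcb⟩ := hbτ
  rw [Finset.centerMass_eq_of_sum_1 _ _ hc1] at hcb
  -- the point `bary w` has `0`-th coordinate zero, so only vertices in that facet carry weight
  have hvan : ∀ x ∈ τ, x 0 ≠ 0 → c x = 0 := by
    have h1 : ∑ x ∈ τ, c x * x 0 = 0 := by
      rw [← hb0, ← hcb]; simp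
    rw [Finset.sum_eq_zero_iff_of_nonneg
      (fun x hx => mul_nonneg (hc0 x hx) ((vertex_mem hτ hx).1 0))] at h1
    intro x hx hx0
    exact (mul_eq_zero.1 (h1 x hx)).resolve_right hx0
  set σ := τ.filter (fun x => x 0 = 0) with hσ
  have hcσ : ∀ x ∈ τ, x ∉ σ → c x = 0 := fun x hx hxσ =>
    hvan x hx fun h => hxσ (Finset.mem_filter.2 ⟨hx, h⟩)
  have hsum : ∑ x ∈ σ, c x = 1 := by
    rw [← hc1]
    exact Finset.sum_subset (Finset.filter_subset _ _) hcσ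
  have hbσ : bary w ∈ convexHull ℝ (σ : Set (Fin (m + 1) → ℝ)) := by
    rw [Finset.convexHull_eq]
    refine ⟨c, fun x hx => hc0 x (Finset.filter_subset _ _ hx), hsum, ?_⟩
    rw [Finset.centerMass_eq_of_sum_1 _ _ hsum, ← hcb]
    refine Finset.sum_subset (Finset.filter_subset _ _) fun x hx hxσ => ?_
    rw [hcσ x hx hxσ, zero_smul]
  have hσn : σ.Nonempty := by
    by_contra h
    rw [Finset.not_nonempty_iff_eq_empty] at h
    rw [h] at hsum
    simp at hsum
  have hσf : σ ∈ T.complex.faces := T.complex.down_closed hτ (Finset.filter_subset _ _) hσn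
  have hσi := hT j σ hσf (fun x hx => (Finset.mem_filter.1 hx).2)
  have hbi : bary (fun i => rmap j (w i)) ∈
      convexHull ℝ ((σ.image (rmap j) : Finset _) : Set (Fin (m + 1) → ℝ)) := by
    rw [← hb, Finset.coe_image, rmap_eq_funLeft, ← LinearMap.image_convexHull]
    exact ⟨_, hbσ, rfl⟩
  have hsub := subset_of_bary_mem hm (Tup.injective hw) hw.2 hσi hbi
  refine ⟨fun a b hab => (rmap_lex_iff (h0 a) (h0 b)).1 (hw.1 hab),
    T.complex.down_closed hσf ?_ ⟨w ⟨0, Nat.pos_of_ne_zero hm⟩, by simp⟩⟩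
  intro x hx
  obtain ⟨i, -, rfl⟩ := Finset.mem_image.1 hx
  obtain ⟨y, hy, hyx⟩ := Finset.mem_image.1 (hsub (Finset.mem_image_of_mem _ (Finset.mem_univ i)))
  rwa [rmap_injective j hyx] at hy

/-- For equivariant vertex maps, all facets contribute equally to the Stokes formula, so that the
degrees agree modulo the number of facets. -/
lemma total_eq_of_equivariant {A : Type*} [CommRing A] [IsDomain A] (hm : m ≠ 0)
    (hT : T.IsNice) (hA : ((m + 1 : ℕ) : A) = 0)
    (F G : (Fin (m + 1) → ℝ) → Fin (m + 1) → A)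
    (hF : ∀ v ∈ T.complex.vertices, ∑ i, F v i = 1)
    (hG : ∀ v ∈ T.complex.vertices, ∑ i, G v i = 1)
    (hF' : ∀ j, ∀ v ∈ T.complex.vertices, v 0 = 0 →
      ∀ l, F (rmap j v) l = F v (Fin.cycleRange j l))
    (hG' : ∀ j, ∀ v ∈ T.complex.vertices, v 0 = 0 →
      ∀ l, G (rmap j v) l = G v (Fin.cycleRange j l)) :
    T.total F = T.total G := by
  have key : ∀ j : Fin (m + 1), ∑ w ∈ (T.tupF m).filter (fun w => ∀ i, w i j = 0),
      (sg (ell w (Pi.single j 1)) : A) * prism F G w =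
      ∑ w ∈ (T.tupF m).filter (fun w => ∀ i, w i 0 = 0),
      (sg (ell w (Pi.single 0 1)) : A) * prism F G w := by
    intro j
    symm
    refine Finset.sum_bij (fun w _ i => rmap j (w i)) ?_ ?_ ?_ ?_
    · intro w hw
      obtain ⟨h1, h2⟩ := Finset.mem_filter.1 hw
      refine Finset.mem_filter.2 ⟨mem_tupF.2 (tup_rmap hT j (mem_tupF.1 h1) h2), fun i => ?_⟩
      exact (rmap_self j (w i)).trans (h2 i)
    · intro w _ w' _ h
      funext i
      exact rmap_injective j (congrFun h i)
    · intro w' hw'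
      obtain ⟨h1, h2⟩ := Finset.mem_filter.1 hw'
      have h3 : (fun i => rmap j fun l => w' i ((Fin.cycleRange j).symm l)) = w' := by
        funext i l
        rw [rmap_apply, Equiv.symm_apply_apply]
      have h4 : ∀ i, w' i ((Fin.cycleRange j).symm 0) = 0 := by
        intro i
        rw [Fin.cycleRange_symm_zero, h2]
      refine ⟨fun i l => w' i ((Fin.cycleRange j).symm l), ?_, h3⟩
      refine Finset.mem_filter.2 ⟨mem_tupF.2 (tup_of_rmap hm hT j ?_ h4), h4⟩
      rw [h3]
      exact mem_tupF.1 h1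
    · intro w hw
      obtain ⟨h1, h2⟩ := Finset.mem_filter.1 hw
      have hv : ∀ i, w i ∈ T.complex.vertices := fun i =>
        mem_vertices_of_mem (mem_tupF.1 h1).2 (by simp)
      rw [ell_rmap, sg_neg_one_pow_mul, prism_rmap j F G w (fun i => hF' j _ (hv i) (h2 i))
        (fun i => hG' j _ (hv i) (h2 i))]
      push_cast
      have h : ((-1 : A) ^ (j : ℕ)) * (-1) ^ (j : ℕ) = 1 := by
        rw [← pow_add, Even.neg_one_pow ⟨_, rfl⟩]
      linear_combination -(sg (ell w (Pi.single 0 1)) : A) * prism F G w * h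
  have h := total_sub (T := T) hm F G hF hG
  rw [Finset.sum_congr rfl (fun j _ => key j), Finset.sum_const, Finset.card_univ,
    Fintype.card_fin, nsmul_eq_mul, hA, zero_mul] at h
  exact (sub_eq_zero.1 h).symm

end Triangulation

/-! ### The identity has degree one -/

/-- The corner simplex: the cone from the origin over the standard simplex. -/
def corner (n : ℕ) : Set (Fin n → ℝ) := {x | (∀ i, 0 ≤ x i) ∧ ∑ i, x i ≤ 1}

lemma corner_isCompact (n : ℕ) : IsCompact (corner n) := by
  refine Metric.isCompact_of_isClosed_isBounded ?_ ?_
  · have h1 : IsClosed {x : Fin n → ℝ | ∀ i, 0 ≤ x i} := by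
      rw [Set.ofPred_forall]
      exact isClosed_iInter fun i => isClosed_le continuous_const (continuous_apply i)
    exact h1.inter (isClosed_le (continuous_finsetSum _ fun i _ => continuous_apply i) continuous_const)
  · refine (Metric.isBounded_Icc (0 : Fin n → ℝ) 1).subset fun x hx => ⟨hx.1, fun i => ?_⟩
    exact (Finset.single_le_sum (fun i _ => hx.1 i) (Finset.mem_univ i)).trans hx.2

lemma corner_volume_pos (n : ℕ) : 0 < MeasureTheory.volume (corner n) := by
  let U : Set (Fin n → ℝ) := {x | (∀ i, 0 < x i) ∧ ∑ i, x i < 1}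
  have hU : IsOpen U := by
    have h1 : IsOpen {x : Fin n → ℝ | ∀ i, 0 < x i} := by
      rw [Set.ofPred_forall]
      exact isOpen_iInter_of_finite fun i => isOpen_lt continuous_const (continuous_apply i)
    exact h1.inter (isOpen_lt (continuous_finsetSum _ fun i _ => continuous_apply i) continuous_const)
  have hne : U.Nonempty := by
    refine ⟨fun _ => 1 / ((n : ℝ) + 1), fun _ => by positivity, ?_⟩
    rw [Finset.sum_const, Finset.card_univ, Fintype.card_fin, nsmul_eq_mul, mul_one_div,
      div_lt_one (by positivity)]
    linarith
  refine (hU.measure_pos MeasureTheory.volume hne).trans_le (MeasureTheory.measure_mono ?_)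
  exact fun x hx => ⟨fun i => (hx.1 i).le, hx.2.le⟩

namespace Triangulation

variable {m : ℕ} {T : Triangulation (m + 1)}

/-- The linear map sending the standard basis to the tuple `u`. -/
def tupMap {m : ℕ} (u : Fin (m + 1) → Fin (m + 1) → ℝ) :
    (Fin (m + 1) → ℝ) →ₗ[ℝ] (Fin (m + 1) → ℝ) := Matrix.toLin' (Matrix.of u).transpose

lemma tupMap_apply (u : Fin (m + 1) → Fin (m + 1) → ℝ) (c : Fin (m + 1) → ℝ) :
    tupMap u c = ∑ i, c i • u i := by
  ext l
  simp [tupMap, Matrix.mulVec, dotProduct, mul_comm]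

lemma sum_tupMap {u : Fin (m + 1) → Fin (m + 1) → ℝ} (hu : u ∈ T.Tup (m + 1))
    (c : Fin (m + 1) → ℝ) : ∑ l, tupMap u c l = ∑ i, c i := by
  have hs : ∀ i, ∑ l, u i l = 1 := fun i => (vertex_mem hu.2 (x := u i) (by simp)).2
  simp only [tupMap_apply, Finset.sum_apply, Pi.smul_apply, smul_eq_mul]
  rw [Finset.sum_comm]
  simp [← Finset.mul_sum, hs]

/-- The cones over the top-dimensional faces cover the corner simplex. -/
lemma iUnion_corner (T : Triangulation (m + 1)) :
    ⋃ u ∈ T.tupF (m + 1), tupMap u '' corner (m + 1) = corner (m + 1) := by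
  apply Set.Subset.antisymm
  · refine Set.iUnion₂_subset fun u hu => ?_
    rintro _ ⟨c, hc, rfl⟩
    have hu' := mem_tupF.1 hu
    refine ⟨fun l => ?_, by rw [sum_tupMap hu']; exact hc.2⟩
    rw [tupMap_apply, Finset.sum_apply]
    exact Finset.sum_nonneg fun i _ =>
      mul_nonneg (hc.1 i) ((vertex_mem hu'.2 (x := u i) (by simp)).1 l)
  · intro x hx
    obtain ⟨p, hp, hpx⟩ : ∃ p ∈ stdSimplex ℝ (Fin (m + 1)), (∑ l, x l) • p = x := by
      by_cases hs : ∑ l, x l = 0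
      · refine ⟨Pi.single 0 1, single_mem_stdSimplex ℝ 0, ?_⟩
        rw [hs, zero_smul]
        funext l
        exact ((Finset.sum_eq_zero_iff_of_nonneg fun i _ => hx.1 i).1 hs l (Finset.mem_univ l)).symm
      · refine ⟨(∑ l, x l)⁻¹ • x, ⟨fun l => ?_, ?_⟩, smul_inv_smul₀ hs x⟩
        · exact mul_nonneg (inv_nonneg.2 (Finset.sum_nonneg fun i _ => hx.1 i)) (hx.1 l)
        · simp only [Pi.smul_apply, smul_eq_mul]
          rw [← Finset.mul_sum, inv_mul_cancel₀ hs]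
    rw [← T.space_eq, Geometry.SimplicialComplex.mem_space_iff] at hp
    obtain ⟨τ₀, hτ₀, hp₀⟩ := hp
    obtain ⟨τ, hτ, hττ, hc⟩ := T.pure _ hτ₀
    have hpτ := convexHull_mono (𝕜 := ℝ) (Finset.coe_subset.2 hττ) hp₀
    obtain ⟨u, hu, rfl⟩ := exists_tup hτ hc
    rw [mem_hull_image_iff] at hpτ
    obtain ⟨c, hc0, hc1, hcp⟩ := hpτ
    refine Set.mem_iUnion₂.2 ⟨u, mem_tupF.2 hu, (∑ l, x l) • c, ⟨fun i => ?_, ?_⟩, ?_⟩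
    · exact mul_nonneg (Finset.sum_nonneg fun i _ => hx.1 i) (hc0 i)
    · simp only [Pi.smul_apply, smul_eq_mul]
      rw [← Finset.mul_sum, hc1, mul_one]
      exact hx.2
    · rw [map_smul, tupMap_apply, hcp, hpx]

/-- The cones over two different top-dimensional faces meet inside the span of their common
vertices, a null set. -/
lemma corner_inter {u u' : Fin (m + 1) → Fin (m + 1) → ℝ} (hu : u ∈ T.Tup (m + 1))
    (hu' : u' ∈ T.Tup (m + 1)) (hne : u ≠ u') :
    MeasureTheory.volume (tupMap u '' corner (m + 1) ∩ tupMap u' '' corner (m + 1)) = 0 := by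
  set S : Submodule ℝ (Fin (m + 1) → ℝ) := Submodule.span ℝ
    ((Finset.univ.image u ∩ Finset.univ.image u' : Finset _) : Set (Fin (m + 1) → ℝ)) with hS
  have hsub : tupMap u '' corner (m + 1) ∩ tupMap u' '' corner (m + 1) ⊆ S := by
    rintro x ⟨⟨c, hc, hcx⟩, ⟨c', hc', hcx'⟩⟩
    have h1 : ∑ i, c i = ∑ l, x l := by rw [← hcx, sum_tupMap hu]
    have h2 : ∑ i, c' i = ∑ l, x l := by rw [← hcx', sum_tupMap hu']
    have hull : ∀ {v : Fin (m + 1) → Fin (m + 1) → ℝ} {d : Fin (m + 1) → ℝ},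
        d ∈ corner (m + 1) → ∑ i, d i = ∑ l, x l → ∑ l, x l ≠ 0 → tupMap v d = x →
        (∑ l, x l)⁻¹ • x ∈
          convexHull ℝ ((Finset.univ.image v : Finset _) : Set (Fin (m + 1) → ℝ)) := by
      intro v d hd hd1 hs hdx
      rw [mem_hull_image_iff]
      refine ⟨(∑ l, x l)⁻¹ • d, fun i => ?_, ?_, ?_⟩
      · exact mul_nonneg (inv_nonneg.2 (hd1 ▸ Finset.sum_nonneg fun i _ => hd.1 i)) (hd.1 i)
      · simp only [Pi.smul_apply, smul_eq_mul]
        rw [← Finset.mul_sum, hd1, inv_mul_cancel₀ hs]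
      · rw [← tupMap_apply, map_smul, hdx]
    by_cases hs : ∑ l, x l = 0
    · have : c = 0 := by
        funext i
        exact (Finset.sum_eq_zero_iff_of_nonneg fun i _ => hc.1 i).1 (h1.trans hs) i
          (Finset.mem_univ i)
      rw [← hcx, this, map_zero]
      exact S.zero_mem
    · have h3 := T.complex.inter_subset_convexHull hu.2 hu'.2
        ⟨hull hc h1 hs hcx, hull hc' h2 hs hcx'⟩
      rw [← Finset.coe_inter] at h3
      have h4 := convexHull_min Submodule.subset_span S.convex h3
      exact (S.smul_mem_iff (inv_ne_zero hs)).1 h4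
  refine MeasureTheory.measure_mono_null hsub (MeasureTheory.Measure.addHaar_submodule _ _ ?_)
  intro htop
  have hfr := finrank_span_finset_le_card (R := ℝ) (Finset.univ.image u ∩ Finset.univ.image u')
  rw [Set.finrank, ← hS, htop, finrank_top, Module.finrank_fin_fun] at hfr
  have h5 : Finset.univ.image u ∩ Finset.univ.image u' = Finset.univ.image u :=
    Finset.eq_of_subset_of_card_le Finset.inter_subset_left (by rw [card_image hu]; exact hfr)
  have h6 : Finset.univ.image u ∩ Finset.univ.image u' = Finset.univ.image u' :=
    Finset.eq_of_subset_of_card_le Finset.inter_subset_right (by rw [card_image hu']; exact hfr)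
  exact hne (tup_ext hu hu' (h5.symm.trans h6))

/-- The identity has degree one: the cones over the top-dimensional faces tile the corner simplex,
and the cone over `u` has `|det u|` times its volume. -/
lemma total_id (T : Triangulation (m + 1)) : T.total (fun x => x) = (1 : ℝ) := by
  have habs : T.total (fun x => x) = ∑ u ∈ T.tupF (m + 1), |(Matrix.of u).det| := by
    refine Finset.sum_congr rfl fun u _ => ?_
    exact sg_mul_self _
  rw [habs]
  have hvol : ∀ u : Fin (m + 1) → Fin (m + 1) → ℝ,
      MeasureTheory.volume (tupMap u '' corner (m + 1)) =
        ENNReal.ofReal |(Matrix.of u).det| * MeasureTheory.volume (corner (m + 1)) := by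
    intro u
    rw [MeasureTheory.Measure.addHaar_image_linearMap, tupMap, LinearMap.det_toLin',
      Matrix.det_transpose]
  have h1 : MeasureTheory.volume (⋃ u ∈ T.tupF (m + 1), tupMap u '' corner (m + 1)) =
      ∑ u ∈ T.tupF (m + 1), MeasureTheory.volume (tupMap u '' corner (m + 1)) := by
    refine MeasureTheory.measure_biUnion_finset₀ ?_ ?_
    · intro u hu u' hu' hne
      exact corner_inter (mem_tupF.1 hu) (mem_tupF.1 hu') hne
    · intro u _
      exact ((corner_isCompact _).image
        (LinearMap.continuous_of_finiteDimensional _)).measurableSet.nullMeasurableSet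
  rw [iUnion_corner, Finset.sum_congr rfl (fun u _ => hvol u), ← Finset.sum_mul,
    ← ENNReal.ofReal_sum_of_nonneg (fun _ _ => abs_nonneg _)] at h1
  have hfin := (corner_isCompact (m + 1)).measure_lt_top (μ := MeasureTheory.volume)
  have h2 : ENNReal.ofReal (∑ u ∈ T.tupF (m + 1), |(Matrix.of u).det|) = 1 := by
    have h3 := (ENNReal.mul_left_inj (corner_volume_pos (m + 1)).ne' hfin.ne).1
      ((one_mul _).trans h1)
    exact h3.symm
  exact ENNReal.ofReal_eq_one.1 h2

end Triangulation

/-! ### The Sperner map and the label map -/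

/-- The Sperner labeling of a point by its least nonzero coordinate, with the labels encoded as
unit vectors. -/
def sperner (A : Type*) [CommRing A] {m : ℕ} (x : Fin (m + 1) → ℝ) : Fin (m + 1) → A :=
  Pi.single (minSupp x) 1

lemma sum_sperner (A : Type*) [CommRing A] {m : ℕ} (x : Fin (m + 1) → ℝ) :
    ∑ i, sperner A x i = 1 := by
  simp [sperner]

lemma sperner_rmap (A : Type*) [CommRing A] {m : ℕ} (j : Fin (m + 1)) {x : Fin (m + 1) → ℝ}
    (hx : x ≠ 0) (h0 : x 0 = 0) (l : Fin (m + 1)) :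
    sperner A (rmap j x) l = sperner A x (Fin.cycleRange j l) := by
  rw [sperner, sperner, minSupp_rmap j hx h0, Pi.single_apply, Pi.single_apply]
  refine if_congr ?_ rfl rfl
  rw [← rho_symm, Equiv.symm_apply_eq]

namespace Triangulation

variable {m : ℕ} {T : Triangulation (m + 1)}

lemma vertex_ne_zero {v : Fin (m + 1) → ℝ} (hv : v ∈ T.complex.vertices) : v ≠ 0 := by
  rintro rfl
  have h := (vertex_mem (T := T) hv (Finset.mem_singleton_self _)).2
  simp at h

lemma total_cast {A : Type*} [CommRing A] (F : (Fin (m + 1) → ℝ) → Fin (m + 1) → ℤ) :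
    T.total (fun x i => (F x i : A)) = ((T.total F : ℤ) : A) := by
  rw [total, total, Int.cast_sum]
  refine Finset.sum_congr rfl fun u _ => ?_
  rw [Int.cast_mul, Int.cast_det]
  rfl

/-- The Sperner map is homotopic to the identity through maps preserving each facet, so the
prisms over the facets are degenerate and both degrees are equal. -/
lemma total_sperner_real (hm : m ≠ 0) : T.total (sperner ℝ) = 1 := by
  have h := total_sub (T := T) hm (sperner ℝ) (fun x => x) (fun v _ => sum_sperner ℝ v)
    (fun v hv => (vertex_mem (T := T) hv (Finset.mem_singleton_self _)).2)
  rw [Finset.sum_eq_zero, total_id] at h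
  · linarith
  intro j _
  refine Finset.sum_eq_zero fun w hw => ?_
  obtain ⟨h1, h2⟩ := Finset.mem_filter.1 hw
  rw [prism, Finset.sum_eq_zero, mul_zero]
  intro i _
  rw [Matrix.det_eq_zero_of_column_eq_zero j, mul_zero]
  intro t
  simp only [Matrix.of_apply, prismRow]
  split_ifs
  · rw [sperner, Pi.single_apply, if_neg]
    rintro rfl
    exact (minSupp_spec (vertex_ne_zero
      (mem_vertices_of_mem (mem_tupF.1 h1).2 (by simp)))).1 (h2 _)
  · exact h2 _

lemma total_sperner_cast (A : Type*) [CommRing A] :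
    T.total (sperner A) = ((T.total (sperner ℤ) : ℤ) : A) := by
  rw [← total_cast]
  congr 1
  funext x i
  simp [sperner, Pi.single_apply]

lemma total_sperner (hm : m ≠ 0) (A : Type*) [CommRing A] : T.total (sperner A) = 1 := by
  have h : T.total (sperner ℤ) = 1 := by
    exact_mod_cast (total_sperner_cast ℝ).symm.trans (total_sperner_real (T := T) hm)
  rw [total_sperner_cast, h, Int.cast_one]

end Triangulation

/-- The uniform distribution on the labels of `x`, with values modulo the number of labels. -/
def labelVec {n : ℕ} (Λ : (Fin n → ℝ) → Finset (Fin n)) (x : Fin n → ℝ) : Fin n → ZMod n :=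
  fun i => if i ∈ Λ x then ((Λ x).card : ZMod n)⁻¹ else 0

lemma sum_labelVec {n : ℕ} (hn : n.Prime) {Λ : (Fin n → ℝ) → Finset (Fin n)} {x : Fin n → ℝ}
    (h : (Λ x).Nonempty ∧ Λ x ≠ Finset.univ) : ∑ i, labelVec Λ x i = 1 := by
  have := Fact.mk hn
  have hlt : (Λ x).card < n := by
    simpa using Finset.card_lt_univ_of_notMem
      (Classical.not_forall.1 fun h' => h.2 (Finset.eq_univ_iff_forall.2 h')).choose_spec
  have hne : ((Λ x).card : ZMod n) ≠ 0 := by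
    rw [Ne, ZMod.natCast_eq_zero_iff]
    exact fun hd => absurd (Nat.le_of_dvd h.1.card_pos hd) (not_le.2 hlt)
  simp only [labelVec, Finset.sum_ite_mem, Finset.univ_inter, Finset.sum_const, nsmul_eq_mul]
  exact mul_inv_cancel₀ hne

lemma labelVec_rmap {m : ℕ} {T : Triangulation (m + 1)}
    {Λ : (Fin (m + 1) → ℝ) → Finset (Fin (m + 1))} (hnice : NiceLabeling T Λ) (j : Fin (m + 1))
    {x : Fin (m + 1) → ℝ} (hx : x ∈ T.complex.vertices) (h0 : x 0 = 0) (l : Fin (m + 1)) :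
    labelVec Λ (rmap j x) l = labelVec Λ x (Fin.cycleRange j l) := by
  rw [labelVec, labelVec, hnice j x hx h0, Finset.card_image_of_injective _ (rho j).injective]
  refine if_congr ?_ rfl rfl
  rw [← rho_symm, Finset.mem_image]
  constructor
  · rintro ⟨i, hi, rfl⟩
    rwa [Equiv.symm_apply_apply]
  · exact fun h => ⟨_, h, Equiv.apply_symm_apply _ _⟩

theorem sperner_symmetry_prime {n : ℕ} [NeZero n] (hn : n.Prime)
    (T : Triangulation n) (hT : T.IsNice)
    (Λ : (Fin n → ℝ) → Finset (Fin n)) (hnice : NiceLabeling T Λ)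
    (hΛ : ∀ v ∈ T.complex.vertices, (Λ v).Nonempty ∧ Λ v ≠ Finset.univ) :
    ∃ τ ∈ T.complex.faces, τ.card = n ∧
      ∃ ℓ : (Fin n → ℝ) → Fin n, Set.InjOn ℓ ↑τ ∧ ∀ u ∈ τ, ℓ u ∈ Λ u := by
  obtain ⟨m, rfl⟩ : ∃ m, n = m + 1 := ⟨n - 1, by have := hn.pos; omega⟩
  have hm : m ≠ 0 := by rintro rfl; exact Nat.not_prime_one hn
  have := Fact.mk hn
  have htot : T.total (labelVec Λ) = 1 := by
    rw [← Triangulation.total_sperner (T := T) hm (ZMod (m + 1))]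
    exact Triangulation.total_eq_of_equivariant hm hT (ZMod.natCast_self _) _ _
      (fun v hv => sum_labelVec hn (hΛ v hv)) (fun v _ => sum_sperner _ v)
      (fun j v hv h0 l => labelVec_rmap hnice j hv h0 l)
      (fun j v hv h0 l => sperner_rmap _ j (Triangulation.vertex_ne_zero hv) h0 l)
  obtain ⟨u, hu, hdet⟩ : ∃ u ∈ T.tupF (m + 1),
      (Matrix.of fun t => labelVec Λ (u t)).det ≠ 0 := by
    by_contra! h
    rw [Triangulation.total, Finset.sum_eq_zero fun u hu => by rw [h u hu, mul_zero]] at htot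
    exact zero_ne_one htot
  obtain ⟨σ, hσ⟩ : ∃ σ : Equiv.Perm (Fin (m + 1)), ∏ i, labelVec Λ (u (σ i)) i ≠ 0 := by
    by_contra! h
    apply hdet
    rw [Matrix.det_apply]
    refine Finset.sum_eq_zero fun σ _ => ?_
    simp only [Matrix.of_apply]
    rw [h σ, smul_zero]
  have hu' := Triangulation.mem_tupF.1 hu
  have hinv : ∀ k, Function.invFun u (u k) = k :=
    Function.leftInverse_invFun (Triangulation.Tup.injective hu')
  refine ⟨_, hu'.2, Triangulation.card_image hu', fun x => σ.symm (Function.invFun u x), ?_, ?_⟩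
  · intro x hx y hy hxy
    obtain ⟨a, -, rfl⟩ := Finset.mem_image.1 (Finset.mem_coe.1 hx)
    obtain ⟨b, -, rfl⟩ := Finset.mem_image.1 (Finset.mem_coe.1 hy)
    have h := σ.symm.injective hxy
    rw [hinv, hinv] at h
    rw [h]
  · intro x hx
    obtain ⟨k, -, rfl⟩ := Finset.mem_image.1 hx
    have h := Finset.prod_ne_zero_iff.1 hσ (σ.symm k) (Finset.mem_univ _)
    rw [Equiv.apply_symm_apply] at h
    simp only [hinv]
    by_contra hk
    exact h (if_neg hk)
end
end
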